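/- arXiv:1810.04813 — 3 statements merged into one kernel-verified Lean document; each statement's English description precedes it below -/
import Mathlib

section
/- For any odd integer k ≥ 3 and any prime p > k+2, the alternating sum ∑_{l=1}^{p-1} (-1)^{l-1}/l^k is congruent to 2(1 - 2^{1-k})·B_{p-k}/k modulo p, where B_n denotes the n-th Bernoulli number. -/
/-!
Since `l⁻¹ ^ k = l ^ (p - 1 - k)` modulo `p`, put `m = p - 1 - k` and consider `∑ (-1) ^ l * l ^ m`
over `l < p`. The full power sum `∑ l ^ m` vanishes modulo `p`, so only twice the even terms
survive, and these are `2 ^ (m + 1) * ∑ j ^ m` over `j < (p + 1) / 2`. By Faulhaber's formula,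
`(m + 1) * ∑ j ^ m = B_{m+1}((p + 1) / 2) - B_{m+1}`. As `m + 2 < p`, the polynomial `B_{m+1}(X)`
has `p`-integral coefficients, so its argument `(p + 1) / 2` may be replaced by `1 / 2`, and Raabe's
multiplication formula expresses `B_{m+1}(1 / 2)` through `B_{m+1}`.
-/

section Raabe

open PowerSeries

/-- The exponential generating function `∑ Bₙ(t) Xⁿ / n!` of the Bernoulli polynomials at `t`. -/
noncomputable def bernoulliPolyPowerSeries (t : ℚ) : ℚ⟦X⟧ :=
  mk fun n => (Polynomial.bernoulli n).eval t / n.factorial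

theorem bernoulliPolyPowerSeries_mul_exp_sub_one (t : ℚ) :
    bernoulliPolyPowerSeries t * (exp ℚ - 1) = X * rescale t (exp ℚ) := by
  rw [← Polynomial.bernoulli_generating_function t]
  simp only [bernoulliPolyPowerSeries, map_smul, Polynomial.coe_aeval_eq_eval, smul_eq_mul,
    one_div_mul_eq_div]

theorem exp_sub_one_ne_zero : exp ℚ - 1 ≠ 0 := by
  intro h
  simpa [coeff_exp, coeff_one] using congrArg (coeff 1) h

theorem sum_bernoulliPolyPowerSeries_add_div {k : ℕ} (hk : k ≠ 0) (x : ℚ) :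
    ∑ i ∈ Finset.range k, bernoulliPolyPowerSeries (x + i / k)
      = C (k : ℚ) * rescale (k : ℚ)⁻¹ (bernoulliPolyPowerSeries (k * x)) := by
  have hk' : (k : ℚ) ≠ 0 := Nat.cast_ne_zero.mpr hk
  set E := rescale (k : ℚ)⁻¹ (exp ℚ) with hE
  have E_pow (i : ℕ) : E ^ i = rescale ((i : ℚ) / k) (exp ℚ) := by
    rw [hE, ← map_pow, exp_pow_eq_rescale_exp, rescale_rescale, div_eq_mul_inv]
  have E_pow_k : E ^ k = exp ℚ := by rw [E_pow, div_self hk', rescale_one, RingHom.id_apply]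
  have summand (i : ℕ) : bernoulliPolyPowerSeries (x + i / k) * (exp ℚ - 1)
      = X * rescale x (exp ℚ) * E ^ i := by
    rw [bernoulliPolyPowerSeries_mul_exp_sub_one, E_pow, mul_assoc, exp_mul_exp_eq_exp_add]
  have rescaled : C (k : ℚ) * rescale (k : ℚ)⁻¹ (bernoulliPolyPowerSeries (k * x)) * (E - 1)
      = X * rescale x (exp ℚ) := by
    have h := congrArg (rescale (k : ℚ)⁻¹) (bernoulliPolyPowerSeries_mul_exp_sub_one (k * x))
    rw [map_mul, map_mul, map_sub, map_one, rescale_X, rescale_rescale,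
      mul_comm (k : ℚ) x, mul_inv_cancel_right₀ hk', mul_comm x, ← hE] at h
    rw [mul_assoc, h, ← mul_assoc, ← mul_assoc, ← map_mul, mul_inv_cancel₀ hk', map_one, one_mul]
  refine mul_right_cancel₀ exp_sub_one_ne_zero ?_
  calc (∑ i ∈ Finset.range k, bernoulliPolyPowerSeries (x + i / k)) * (exp ℚ - 1)
      = X * rescale x (exp ℚ) * ∑ i ∈ Finset.range k, E ^ i := by
        rw [Finset.sum_mul, Finset.mul_sum]
        exact Finset.sum_congr rfl fun i _ => summand i
    _ = C (k : ℚ) * rescale (k : ℚ)⁻¹ (bernoulliPolyPowerSeries (k * x)) * (exp ℚ - 1) := by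
        rw [← rescaled, mul_assoc, mul_geom_sum, E_pow_k]

theorem pow_mul_sum_bernoulli_eval_add_div {k : ℕ} (hk : k ≠ 0) (n : ℕ) (x : ℚ) :
    (k : ℚ) ^ n * ∑ i ∈ Finset.range k, (Polynomial.bernoulli n).eval (x + i / k)
      = k * (Polynomial.bernoulli n).eval (k * x) := by
  have h := congrArg (coeff n) (sum_bernoulliPolyPowerSeries_add_div hk x)
  simp only [map_sum, coeff_C_mul, coeff_rescale, bernoulliPolyPowerSeries, coeff_mk,
    ← Finset.sum_div, ← mul_div_assoc] at h
  rw [div_left_inj' (Nat.cast_ne_zero.mpr n.factorial_ne_zero)] at h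
  rw [h, mul_left_comm, inv_pow, mul_inv_cancel_left₀ (pow_ne_zero n (Nat.cast_ne_zero.mpr hk))]

theorem two_pow_mul_bernoulli_eval_inv_two (n : ℕ) :
    2 ^ n * (Polynomial.bernoulli n).eval (2⁻¹ : ℚ) = (2 - 2 ^ n) * bernoulli n := by
  have raabe := pow_mul_sum_bernoulli_eval_add_div two_ne_zero n 0
  simp only [Finset.sum_range_succ, Finset.sum_range_zero, Nat.cast_zero, Nat.cast_one,
    Nat.cast_ofNat, zero_div, one_div, zero_add, mul_zero,
    Polynomial.bernoulli_eval_zero] at raabe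
  linear_combination raabe

end Raabe

section Integrality

/-- The rationals whose denominator is nonzero in `F`, on which the cast `ℚ → F` is a ring
homomorphism. For `F = ZMod p` these are the `p`-integral rationals. -/
def integralRat (F : Type*) [Field F] : Subring ℚ where
  carrier := {q | (q.den : F) ≠ 0}
  mul_mem' {q r} hq hr :=
    ne_zero_of_dvd_ne_zero (mul_ne_zero hq hr) (mod_cast Nat.cast_dvd_cast (Rat.mul_den_dvd q r))
  one_mem' := by simp
  add_mem' {q r} hq hr :=
    ne_zero_of_dvd_ne_zero (mul_ne_zero hq hr) (mod_cast Nat.cast_dvd_cast (Rat.add_den_dvd q r))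
  zero_mem' := by simp
  neg_mem' := by simp

namespace integralRat

/-- The cast `ℚ → F` on `integralRat F`; for `F = ZMod p`, reduction modulo `p`. -/
def castHom (F : Type*) [Field F] : integralRat F →+* F where
  toFun q := (q : ℚ)
  map_one' := by simp
  map_mul' q r := Rat.cast_mul_of_ne_zero q.2 r.2
  map_zero' := by simp
  map_add' q r := Rat.cast_add_of_ne_zero q.2 r.2

variable {F : Type*} [Field F]

theorem inv_natCast_mem {n : ℕ} (hn : (n : F) ≠ 0) : (n : ℚ)⁻¹ ∈ integralRat F := by
  have hn₀ : n ≠ 0 := by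
    rintro rfl
    exact hn Nat.cast_zero
  simpa [integralRat, Rat.inv_natCast_den, hn₀] using hn

theorem bernoulli_mem {n : ℕ} (hn : IsUnit ((n + 1).factorial : F)) :
    bernoulli n ∈ integralRat F := by
  induction n using Nat.strong_induction_on with
  | _ n ih =>
    have succ_ne_zero : ((n + 1 : ℕ) : F) ≠ 0 := fun h =>
      hn.ne_zero (by rw [Nat.factorial_succ, Nat.cast_mul, h, zero_mul])
    have recurrence : bernoulli n = ((n + 1 : ℕ) : ℚ)⁻¹ * ((if n + 1 = 1 then 1 else 0)
        - ∑ i ∈ Finset.range n, ((n + 1).choose i : ℚ) * bernoulli i) := by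
      rw [← sum_bernoulli (n + 1), Finset.sum_range_succ, Nat.choose_succ_self_right,
        add_sub_cancel_left, inv_mul_cancel_left₀ (Nat.cast_ne_zero.mpr n.succ_ne_zero)]
    rw [recurrence]
    refine mul_mem (inv_natCast_mem succ_ne_zero) (sub_mem ?_ (sum_mem fun i hi => ?_))
    · split_ifs
      exacts [one_mem _, zero_mem _]
    · have hi := Finset.mem_range.mp hi
      exact mul_mem (natCast_mem _ _) (ih i hi (hn.natCast_factorial_of_le (by omega)))

theorem exists_map_subtype_eq_bernoulli {n : ℕ} (hn : IsUnit ((n + 1).factorial : F)) :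
    ∃ B : Polynomial (integralRat F), B.map (integralRat F).subtype = Polynomial.bernoulli n := by
  refine (Polynomial.mem_lifts _).mp <| (Polynomial.lifts_iff_coeff_lifts _).mpr fun i => ?_
  rw [Subring.coe_subtype, Subtype.range_coe, Polynomial.coeff_bernoulli]
  split_ifs
  · exact mul_mem (bernoulli_mem (hn.natCast_factorial_of_le (by omega))) (natCast_mem _ _)
  · exact zero_mem _

end integralRat

variable {F : Type*} [Field F]

open integralRat in
theorem two_pow_mul_sum_range_pow_of_two_mul_eq_one {m n : ℕ}
    (hm : IsUnit ((m + 2).factorial : F)) (hn : 2 * (n : F) = 1) :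
    2 ^ (m + 1) * ((m + 1) * ∑ j ∈ Finset.range n, (j : F) ^ m)
      = 2 * (1 - 2 ^ (m + 1)) * (bernoulli (m + 1) : ℚ) := by
  have two_ne_zero : (2 : F) ≠ 0 := left_ne_zero_of_mul_eq_one hn
  let b : integralRat F := ⟨bernoulli (m + 1), bernoulli_mem hm⟩
  let half : integralRat F := ⟨((2 : ℕ) : ℚ)⁻¹, inv_natCast_mem (mod_cast two_ne_zero)⟩
  obtain ⟨B, hB⟩ := exists_map_subtype_eq_bernoulli hm
  have coe_eval (x : integralRat F) :
      ((B.eval x : integralRat F) : ℚ) = (Polynomial.bernoulli (m + 1)).eval (x : ℚ) := by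
    rw [← hB]
    exact (Polynomial.eval_map_apply (integralRat F).subtype x).symm
  have faulhaber :
      (m + 1) * ∑ j ∈ Finset.range n, (j : integralRat F) ^ m = B.eval (n : integralRat F) - b := by
    apply Subtype.ext
    push_cast [coe_eval]
    exact Polynomial.sum_range_pow_eq_bernoulli_sub n m
  have eval_half : 2 ^ (m + 1) * B.eval half = (2 - 2 ^ (m + 1)) * b := by
    apply Subtype.ext
    push_cast [coe_eval]
    exact two_pow_mul_bernoulli_eval_inv_two (m + 1)
  have cast_n : castHom F n = castHom F half := by
    have two_mul_half : 2 * half = 1 := Subtype.ext (mul_inv_cancel₀ (two_ne_zero' ℚ))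
    have cast_two_mul_half := congrArg (castHom F) two_mul_half
    rw [map_mul, map_ofNat, map_one, ← hn] at cast_two_mul_half
    rw [map_natCast, mul_left_cancel₀ two_ne_zero cast_two_mul_half]
  have cast_eval_n : castHom F (B.eval (n : integralRat F)) = castHom F (B.eval half) := by
    rw [← Polynomial.eval_map_apply, cast_n, Polynomial.eval_map_apply]
  apply_fun castHom F at faulhaber eval_half
  simp only [map_mul, map_add, map_sub, map_pow, map_one, map_sum, map_natCast, map_ofNat,
    cast_eval_n] at faulhaber eval_half
  change _ = _ * castHom F b
  linear_combination 2 ^ (m + 1) * faulhaber + eval_half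

end Integrality

theorem sum_range_neg_one_pow_mul {R : Type*} [CommRing R] (f : ℕ → R) (n : ℕ) :
    ∑ l ∈ Finset.range (2 * n + 1), (-1) ^ l * f l
      = 2 * ∑ j ∈ Finset.range (n + 1), f (2 * j) - ∑ l ∈ Finset.range (2 * n + 1), f l := by
  induction n with
  | zero =>
    simp only [mul_zero, zero_add, Finset.sum_range_one, pow_zero]
    ring
  | succ n ih =>
    have neg_one_pow_odd : (-1 : R) ^ (2 * n + 1) = -1 := Odd.neg_one_pow ⟨n, rfl⟩
    have neg_one_pow_even : (-1 : R) ^ (2 * n + 1 + 1) = 1 := Even.neg_one_pow ⟨n + 1, by ring⟩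
    rw [Finset.sum_range_succ _ (n + 1), show 2 * (n + 1) = 2 * n + 1 + 1 by ring]
    simp only [Finset.sum_range_succ _ (2 * n + 1 + 1), Finset.sum_range_succ _ (2 * n + 1), ih,
      neg_one_pow_odd, neg_one_pow_even]
    ring

section ZMod

theorem natCast_ne_zero_of_pos_of_lt {p n : ℕ} (hn : 0 < n) (hnp : n < p) :
    (n : ZMod p) ≠ 0 := by
  rw [Ne, ZMod.natCast_eq_zero_iff]
  exact Nat.not_dvd_of_pos_of_lt hn hnp

variable {p : ℕ} [Fact p.Prime]

theorem sum_range_natCast_pow_eq_zero {m : ℕ} (hm : m < p - 1) :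
    ∑ l ∈ Finset.range p, (l : ZMod p) ^ m = 0 := by
  rw [← FiniteField.sum_pow_lt_card_sub_one (ZMod p) m (by rwa [ZMod.card])]
  refine Finset.sum_nbij' (fun l => (l : ZMod p)) ZMod.val ?_ ?_ ?_ ?_ ?_
  all_goals simp +contextual [ZMod.val_lt, ZMod.val_natCast, Nat.mod_eq_of_lt]

theorem succ_mul_sum_range_neg_one_pow_mul_pow {m : ℕ} (hm : m + 2 < p) :
    (m + 1) * ∑ l ∈ Finset.range p, (-1) ^ l * (l : ZMod p) ^ m
      = 2 * (1 - 2 ^ (m + 1)) * (bernoulli (m + 1) : ℚ) := by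
  obtain ⟨n, p_eq⟩ := (Fact.out : p.Prime).odd_of_ne_two (by omega)
  have factorial_isUnit : IsUnit ((m + 2).factorial : ZMod p) :=
    (IsUnit.natCast_factorial_iff_of_charP p).mpr hm
  have two_mul_half : 2 * ((n + 1 : ℕ) : ZMod p) = 1 := by
    have : ((2 * (n + 1) : ℕ) : ZMod p) = ((p + 1 : ℕ) : ZMod p) := congrArg _ (by omega)
    simpa using this
  have even_terms : ∑ j ∈ Finset.range (n + 1), ((2 * j : ℕ) : ZMod p) ^ m
      = 2 ^ m * ∑ j ∈ Finset.range (n + 1), (j : ZMod p) ^ m := by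
    simp only [Nat.cast_mul, mul_pow, Finset.mul_sum, Nat.cast_ofNat]
  have parity := sum_range_neg_one_pow_mul (fun l => (l : ZMod p) ^ m) n
  rw [← p_eq, even_terms, sum_range_natCast_pow_eq_zero (by omega)] at parity
  rw [parity, ← two_pow_mul_sum_range_pow_of_two_mul_eq_one factorial_isUnit two_mul_half]
  ring

theorem sum_Icc_neg_one_pow_mul_inv_pow {k : ℕ} (hk : k < p - 1) :
    ∑ l ∈ Finset.Icc 1 (p - 1), (-1 : ZMod p) ^ (l - 1) * (l : ZMod p)⁻¹ ^ k
      = -∑ l ∈ Finset.range p, (-1) ^ l * (l : ZMod p) ^ (p - 1 - k) := by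
  have range_eq : Finset.range p = insert 0 (Finset.Icc 1 (p - 1)) := by
    ext l
    simp only [Finset.mem_range, Finset.mem_insert, Finset.mem_Icc]
    omega
  rw [range_eq, Finset.sum_insert (by simp), Nat.cast_zero, zero_pow (by omega), mul_zero,
    zero_add, ← Finset.sum_neg_distrib]
  refine Finset.sum_congr rfl fun l hl => ?_
  obtain ⟨hl₁, hlp⟩ := Finset.mem_Icc.mp hl
  have hl₀ : (l : ZMod p) ≠ 0 := natCast_ne_zero_of_pos_of_lt hl₁ (by omega)
  have fermat : (l : ZMod p)⁻¹ ^ k = (l : ZMod p) ^ (p - 1 - k) := by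
    rw [inv_pow, pow_sub₀ _ hl₀ hk.le, ZMod.pow_card_sub_one_eq_one hl₀, one_mul]
  obtain ⟨i, rfl⟩ := Nat.exists_eq_add_of_le' hl₁
  rw [fermat, Nat.add_sub_cancel, pow_succ, mul_neg_one, neg_mul, neg_neg]

end ZMod

theorem stmt_1_general (k p : ℕ) (hk : 2 ≤ k) [Fact p.Prime] (hp : k + 1 < p) :
    ∑ l ∈ Finset.Icc 1 (p - 1), (-1 : ZMod p) ^ (l - 1) * ((l : ZMod p))⁻¹ ^ k =
      2 * (1 - (2 : ZMod p) ^ ((1 : ℤ) - k)) * ((bernoulli (p - k) / k : ℚ) : ZMod p) := by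
  have k_ne_zero : (k : ZMod p) ≠ 0 := natCast_ne_zero_of_pos_of_lt (by omega) (by omega)
  have two_ne_zero : (2 : ZMod p) ≠ 0 :=
    mod_cast natCast_ne_zero_of_pos_of_lt (p := p) (n := 2) two_pos (by omega)
  have hm : p - 1 - k + 1 = p - k := by omega
  have cast_succ : ((p - 1 - k : ℕ) : ZMod p) + 1 = -k := by
    rw [← Nat.cast_add_one, hm, Nat.cast_sub (by omega), ZMod.natCast_self, zero_sub]
  have two_zpow : (2 : ZMod p) ^ ((1 : ℤ) - k) = 2 ^ (p - k) := by
    rw [zpow_sub₀ two_ne_zero, zpow_one, zpow_natCast, pow_sub₀ _ two_ne_zero (by omega),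
      ZMod.pow_card, div_eq_mul_inv]
  have bernoulli_integral : bernoulli (p - k) ∈ integralRat (ZMod p) :=
    integralRat.bernoulli_mem <| (IsUnit.natCast_factorial_iff_of_charP p).mpr (by omega)
  have cast_div : ((bernoulli (p - k) / k : ℚ) : ZMod p) = (bernoulli (p - k) : ℚ) / k := by
    rw [Rat.cast_div_of_ne_zero bernoulli_integral (by simpa using k_ne_zero), Rat.cast_natCast]
  have key := succ_mul_sum_range_neg_one_pow_mul_pow (p := p) (m := p - 1 - k) (by omega)
  rw [cast_succ, hm] at key
  rw [sum_Icc_neg_one_pow_mul_inv_pow (by omega), two_zpow, cast_div, ← mul_div_assoc,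
    eq_div_iff k_ne_zero]
  linear_combination key

/-- For odd `k ≥ 3` and a prime `p > k + 2`, the alternating power sum
`∑_{l=1}^{p-1} (-1)^{l-1}/l^k` is congruent to `2(1 - 2^{1-k}) B_{p-k}/k` mod `p`. -/
theorem stmt_1 (k p : ℕ) (hk : 3 ≤ k) (hodd : Odd k) [Fact p.Prime]
    (hp : k + 2 < p) :
    ∑ l ∈ Finset.Icc 1 (p - 1), (-1 : ZMod p) ^ (l - 1) * ((l : ZMod p))⁻¹ ^ k =
      2 * (1 - (2 : ZMod p) ^ ((1 : ℤ) - k)) * ((bernoulli (p - k) / k : ℚ) : ZMod p) :=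
  stmt_1_general k p (by omega) (by omega)
end

section
/- Fix k ≥ 2 and s ≥ 1 with k ≥ 2s. Let I_0(k,s) be the set of indices (k_1,...,k_r) of positive integers with k_1 > 1, total sum k, and exactly s components greater than 1. Then for each prime p > k+2, the sum ∑_{𝐤 ∈ I_0(k,s)} H_p^⋆(𝐤) is congruent modulo p to 2·binom(k-1, 2s-1)·(1 - 2^{1-k})·B_{p-k}/k, where H_p^⋆(k_1,...,k_r) = ∑_{p>m_1≥⋯≥m_r>0} ∏ m_i^{-k_i} and B_n is the Bernoulli number. -/
/-- Auxiliary non-strict truncated multiple harmonic sum. -/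
def HstarAux (p : ℕ) : ℕ → List ℕ → ZMod p
  | _, [] => 1
  | N, k :: ks => ∑ m ∈ Finset.Ioo 0 N, ((m : ZMod p))⁻¹ ^ k * HstarAux p (m + 1) ks

/-- `H_p^⋆(k₁,…,k_r) = ∑_{p > m₁ ≥ ⋯ ≥ m_r > 0} ∏ᵢ mᵢ^{-kᵢ}` in `ℤ/pℤ`. -/
def Hps (p : ℕ) (ks : List ℕ) : ZMod p := HstarAux p p ks

/-- `I₀(k,s)`: indices `(k₁,…,k_r)` of positive integers (compositions of `k`)
with `k₁ > 1` and exactly `s` components greater than `1`. -/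
def Izero (k s : ℕ) : Finset (Composition k) :=
  Finset.univ.filter fun c =>
    2 ≤ c.blocks.headI ∧ (c.blocks.filter fun x => 2 ≤ x).length = s

/-!
Mark the weight of an index by `X` and its height by `z²`. In the generating series of the sums
truncated at `N`, each summation variable `m < N` contributes the factor
`m (m - X) / ((m - X)² - (z X)²)`, because the components attached to `m` can be chosen
independently. The condition `k₁ > 1` turns the full series into
`∑ₘ (z X)² / (m (m - X)) · ∏_{l ≤ m} l (l - X) / ((l - X)² - (z X)²)`.

Expanding in partial fractions in `(z X)²`, the residue at `(r - X)²` is a terminating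
hypergeometric sum. Since `(p - 1 - N + i)!` is, up to a factor independent of `i`,
`(-1)ⁱ i! (N choose i)` modulo `p`, Chu–Vandermonde evaluates it, and `(y)ₚ = yᵖ - y` reduces its
value to a sign. What is left is a sum of the simple fractions `(m - (1 ± z) X)⁻¹`, whose
coefficients are `∑ₘ (-1)ᵐ⁺¹ m⁻ᵏ` times binomial coefficients, and this alternating power sum is
a Bernoulli number by Faulhaber's formula evaluated at `(p + 1) / 2 ≡ 1 / 2`.
-/

namespace AokiOhno

open Finset

section PrimeField

lemma natCast_ne_zero_of_lt {K : Type*} [AddMonoidWithOne K] (p : ℕ) [CharP K p] {n : ℕ}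
    (h₀ : n ≠ 0) (hn : n < p) : (n : K) ≠ 0 := by
  rw [Ne, CharP.cast_eq_zero_iff K p]
  exact Nat.not_dvd_of_pos_of_lt (Nat.pos_of_ne_zero h₀) hn

lemma sum_range_natCast_zmod {p : ℕ} [NeZero p] {M : Type*} [AddCommMonoid M]
    (f : ZMod p → M) :
    ∑ n ∈ range p, f n = ∑ a, f a := by
  refine sum_bij' (fun n _ ↦ (n : ZMod p)) (fun a _ ↦ a.val) (fun _ _ ↦ mem_univ _)
    (fun a _ ↦ mem_range.mpr a.val_lt) (fun n hn ↦ ZMod.val_cast_of_lt (mem_range.mp hn))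
    (fun a _ ↦ ZMod.natCast_zmod_val a) fun _ _ ↦ rfl

variable {p : ℕ} [Fact p.Prime]

lemma sum_range_natCast_pow_eq_zero {q : ℕ} (hq : q < p - 1) :
    ∑ n ∈ range p, (n : ZMod p) ^ q = 0 := by
  rw [sum_range_natCast_zmod (fun a ↦ a ^ q)]
  exact FiniteField.sum_pow_lt_card_sub_one (ZMod p) q (by rwa [ZMod.card])

lemma inv_pow_eq_pow_sub {a : ZMod p} (ha : a ≠ 0) {k : ℕ} (hk : k ≤ p - 1) :
    a⁻¹ ^ k = a ^ (p - 1 - k) := by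
  rw [inv_pow, inv_eq_iff_eq_inv]
  refine eq_inv_of_mul_eq_one_left ?_
  rw [← pow_add, Nat.add_sub_cancel' hk, ZMod.pow_card_sub_one_eq_one ha]

lemma sum_mul_inv_pow_eq_sum_range (a : ℕ → ZMod p) {k q : ℕ} (hq : q ≠ 0)
    (hkq : p = q + 1 + k) :
    ∑ m ∈ Ioo 0 p, a m * (m : ZMod p)⁻¹ ^ k = ∑ m ∈ range p, a m * (m : ZMod p) ^ q := by
  rw [range_eq_Ico, ← Ioo_insert_left (by omega : 0 < p), sum_insert left_notMem_Ioo,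
    Nat.cast_zero, zero_pow hq, mul_zero, zero_add]
  refine sum_congr rfl fun m hm ↦ ?_
  have hm := mem_Ioo.mp hm
  rw [inv_pow_eq_pow_sub (natCast_ne_zero_of_lt p hm.1.ne' hm.2) (by omega),
    show p - 1 - k = q by omega]

lemma sum_inv_pow_eq_zero {k : ℕ} (hk₀ : k ≠ 0) (hk : k < p - 1) :
    ∑ m ∈ Ioo 0 p, (m : ZMod p)⁻¹ ^ k = 0 := by
  obtain ⟨q, hq⟩ : ∃ q, p = q + 1 + k := ⟨p - 1 - k, by omega⟩
  have h := sum_mul_inv_pow_eq_sum_range (fun _ ↦ 1) (by omega) hq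
  simp only [one_mul] at h
  rw [h, sum_range_natCast_pow_eq_zero (by omega)]

end PrimeField

section CompositionSeries

open scoped PowerSeries
open PowerSeries

lemma sum_composition_succ {M : Type*} [AddCommMonoid M] (f : List ℕ → M) (n : ℕ) :
    ∑ c : Composition (n + 1), f c.blocks =
      ∑ ij ∈ antidiagonal n, ∑ c : Composition ij.2, f ((ij.1 + 1) :: c.blocks) := by
  rw [sum_sigma']
  symm
  refine sum_bij (fun a ha ↦ ⟨(a.1.1 + 1) :: a.2.blocks, ?_, ?_⟩) (fun _ _ ↦ mem_univ _) ?_ ?_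
    fun _ _ ↦ rfl
  · intro i hi
    rcases List.mem_cons.mp hi with rfl | hi
    · exact Nat.succ_pos _
    · exact a.2.blocks_pos hi
  · have hij := HasAntidiagonal.mem_antidiagonal.mp (mem_sigma.mp ha).1
    rw [List.sum_cons, a.2.blocks_sum]
    omega
  · rintro ⟨⟨i, j⟩, c⟩ _ ⟨⟨i', j'⟩, c'⟩ _ h
    simp only [Composition.mk.injEq, List.cons.injEq, Nat.add_right_cancel_iff] at h
    obtain ⟨rfl, hblocks⟩ := h
    obtain rfl : j = j' := c.blocks_sum.symm.trans ((congrArg List.sum hblocks).trans c'.blocks_sum)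
    rw [Composition.ext hblocks]
  · rintro ⟨blocks, hpos, hsum⟩ _
    cases blocks with
    | nil => simp at hsum
    | cons a l =>
      have ha : a - 1 + 1 = a := Nat.sub_add_cancel (hpos List.mem_cons_self)
      have hmem : (a - 1, l.sum) ∈ antidiagonal n := by
        rw [HasAntidiagonal.mem_antidiagonal]
        rw [List.sum_cons] at hsum
        omega
      exact ⟨⟨(a - 1, l.sum), ⟨l, fun h ↦ hpos (List.mem_cons_of_mem _ h), rfl⟩⟩,
        mem_sigma.mpr ⟨hmem, mem_univ _⟩, Composition.ext (by simp only [ha])⟩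

variable {A : Type*}

/-- The generating series of a function of indices: the coefficient of `Xⁿ` is its sum over the
compositions of `n`. -/
noncomputable def compositionSeries [Semiring A] (f : List ℕ → A) : A⟦X⟧ :=
  PowerSeries.mk fun n ↦ ∑ c : Composition n, f c.blocks

lemma compositionSeries_eq_C_add_X_mul [CommSemiring A] {ι : Type*} {s : Finset ι} {f : List ℕ → A}
    {w : ι → ℕ → A} {g : ι → List ℕ → A}
    (hf : ∀ i l, f ((i + 1) :: l) = ∑ m ∈ s, w m i * g m l) :
    compositionSeries f =
      C (f []) + X * ∑ m ∈ s, PowerSeries.mk (w m) * compositionSeries (g m) := by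
  ext n
  cases n with
  | zero =>
    have hnil (c : Composition 0) : c.blocks = [] := c.blocks_eq_nil.mpr rfl
    simp [compositionSeries, hnil, composition_card]
  | succ n =>
    rw [map_add, coeff_succ_X_mul, coeff_succ_C, zero_add, map_sum, compositionSeries, coeff_mk,
      sum_composition_succ]
    simp only [hf, coeff_mul, compositionSeries, coeff_mk, mul_sum]
    rw [sum_comm]
    exact sum_congr rfl fun ij _ ↦ sum_comm

/-- The geometric series `∑ aⁿ Xⁿ = (1 - a X)⁻¹`. -/
noncomputable def geomSeries [Semiring A] (a : A) : A⟦X⟧ := PowerSeries.mk fun n ↦ a ^ n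

lemma geomSeries_mul_one_sub [CommRing A] (a : A) : geomSeries a * (1 - C a * X) = 1 := by
  ext n
  cases n with
  | zero => simp [geomSeries]
  | succ n =>
    rw [mul_sub, mul_one, map_sub, mul_comm (C a), ← mul_assoc, coeff_mul_C, coeff_succ_mul_X]
    simp [geomSeries, pow_succ, coeff_one]

lemma map_geomSeries [CommRing A] {K : Type*} [Field K] (φ : A⟦X⟧ →+* K) (a : A) :
    φ (geomSeries a) = (1 - φ (C a) * φ X)⁻¹ := by
  refine eq_inv_of_mul_eq_one_left ?_
  simpa using congrArg φ (geomSeries_mul_one_sub a)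

/-- The weight of a component `i + 1` whose summation variable has inverse `u`, where `z ^ 2` marks
the components greater than `1`. -/
def blockWeight [Semiring A] (z u : A) (i : ℕ) : A := u ^ (i + 1) * if 1 ≤ i then z ^ 2 else 1

lemma mk_pow_succ_mul_ite [CommRing A] (z u : A) :
    PowerSeries.mk (fun i ↦ u ^ (i + 1) * if 1 ≤ i then z ^ 2 else 0) =
      C (z ^ 2 * u ^ 2) * X * geomSeries u := by
  ext i
  rw [mul_assoc]
  cases i with
  | zero => simp
  | succ i =>
    rw [coeff_C_mul, coeff_succ_X_mul, geomSeries, coeff_mk, coeff_mk, if_pos (by omega)]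
    ring

lemma mk_blockWeight [CommRing A] (z u : A) :
    PowerSeries.mk (blockWeight z u) = C u + C (z ^ 2 * u ^ 2) * X * geomSeries u := by
  rw [← mk_pow_succ_mul_ite]
  ext i
  cases i <;> simp [blockWeight]

lemma one_sub_X_mul_mk_blockWeight [CommRing A] (z u : A) :
    (1 - X * PowerSeries.mk (blockWeight z u)) * (1 - C u * X) =
      (1 - C ((1 + z) * u) * X) * (1 - C ((1 - z) * u) * X) := by
  rw [mk_blockWeight]
  simp only [map_mul, map_add, map_sub, map_pow, map_one]
  linear_combination -(C z ^ 2 * C u ^ 2 * X ^ 2) * geomSeries_mul_one_sub u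

end CompositionSeries

section HarmonicSeries

open scoped Polynomial PowerSeries
open PowerSeries

/-- The height of an index: the number of its components greater than `1`. -/
def height (l : List ℕ) : ℕ := (l.filter fun x ↦ 2 ≤ x).length

lemma height_succ_cons (i : ℕ) (l : List ℕ) :
    height ((i + 1) :: l) = (if 1 ≤ i then 1 else 0) + height l := by
  simp only [height, List.filter_cons, Nat.reduceLeDiff, decide_eq_true_eq]
  split_ifs <;> simp [add_comm]

variable (p : ℕ)

/-- The truncated sum `HstarAux p N l`, with `z ^ 2` marking the height of `l` (here `z` is the
polynomial variable). -/
noncomputable def hstarTerm (N : ℕ) (l : List ℕ) : (ZMod p)[X] :=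
  Polynomial.C (HstarAux p N l) * Polynomial.X ^ (2 * height l)

/-- The inverse of a summation variable, as a constant polynomial. -/
noncomputable abbrev natInv (m : ℕ) : (ZMod p)[X] := Polynomial.C (m : ZMod p)⁻¹

lemma hstarTerm_cons (N i : ℕ) (l : List ℕ) :
    hstarTerm p N ((i + 1) :: l) =
      ∑ m ∈ Ioo 0 N, blockWeight Polynomial.X (natInv p m) i * hstarTerm p (m + 1) l := by
  rw [hstarTerm, HstarAux, map_sum, sum_mul, height_succ_cons]
  refine sum_congr rfl fun m _ ↦ ?_
  rw [blockWeight, hstarTerm, map_mul, map_pow]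
  split_ifs <;> ring

/-- The generating series of the truncated sums, in which `X` marks the weight and `z ^ 2` the
height. -/
noncomputable def hstarSeries (N : ℕ) : (ZMod p)[X]⟦X⟧ := compositionSeries (hstarTerm p N)

lemma hstarSeries_eq (N : ℕ) :
    hstarSeries p N = 1 + X * ∑ m ∈ Ioo 0 N,
      PowerSeries.mk (blockWeight Polynomial.X (natInv p m)) * hstarSeries p (m + 1) := by
  have hnil : hstarTerm p N [] = 1 := by simp [hstarTerm, HstarAux, height]
  rw [hstarSeries, compositionSeries_eq_C_add_X_mul (hstarTerm_cons p N), hnil, map_one]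
  rfl

lemma hstarSeries_succ_mul {m : ℕ} (hm : 0 < m) :
    hstarSeries p (m + 1) *
        (1 - X * PowerSeries.mk (blockWeight Polynomial.X (natInv p m))) = hstarSeries p m := by
  have hsucc := hstarSeries_eq p (m + 1)
  rw [← Order.succ_eq_add_one m, Ioo_succ_right_eq_Ioc, ← Ioo_insert_right hm,
    sum_insert right_notMem_Ioo, Order.succ_eq_add_one] at hsucc
  linear_combination hsucc - hstarSeries_eq p m

/-- The contribution to the generating series of the summation variables equal to `m`. -/
noncomputable def hstarFactor (m : ℕ) : (ZMod p)[X]⟦X⟧ :=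
  (1 - C (natInv p m) * X) * geomSeries ((1 + Polynomial.X) * natInv p m) *
    geomSeries ((1 - Polynomial.X) * natInv p m)

lemma one_sub_X_mul_mk_blockWeight_mul_hstarFactor (m : ℕ) :
    (1 - X * PowerSeries.mk (blockWeight Polynomial.X (natInv p m))) * hstarFactor p m = 1 := by
  have hplus := geomSeries_mul_one_sub ((1 + Polynomial.X) * natInv p m)
  have hminus := geomSeries_mul_one_sub ((1 - Polynomial.X) * natInv p m)
  have hfactor := one_sub_X_mul_mk_blockWeight Polynomial.X (natInv p m)
  rw [hstarFactor, ← mul_assoc, ← mul_assoc, hfactor]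
  linear_combination (1 - C ((1 - Polynomial.X) * natInv p m) * X) *
    geomSeries ((1 - Polynomial.X) * natInv p m) * hplus + hminus

lemma hstarSeries_succ (m : ℕ) : hstarSeries p (m + 1) = ∏ l ∈ Ioo 0 (m + 1), hstarFactor p l := by
  induction m with
  | zero =>
    have hempty : Ioo 0 1 = (∅ : Finset ℕ) := rfl
    rw [hstarSeries_eq, zero_add, hempty, sum_empty, prod_empty, mul_zero, add_zero]
  | succ m ih =>
    rw [← Order.succ_eq_add_one (m + 1), Ioo_succ_right_eq_Ioc, ← Ioo_insert_right m.succ_pos,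
      prod_insert right_notMem_Ioo, ← ih, ← hstarSeries_succ_mul p m.succ_pos,
      Order.succ_eq_add_one]
    linear_combination -hstarSeries p (m + 1 + 1) *
      one_sub_X_mul_mk_blockWeight_mul_hstarFactor p (m + 1)

/-- The part of `hstarSeries p p` coming from the indices whose first component exceeds `1`. -/
noncomputable def admissibleSeries : (ZMod p)[X]⟦X⟧ :=
  compositionSeries fun l ↦ if 2 ≤ l.headI then hstarTerm p p l else 0

lemma admissibleSeries_eq :
    admissibleSeries p = ∑ m ∈ Ioo 0 p,
      C (Polynomial.X ^ 2 * natInv p m ^ 2) * X ^ 2 * geomSeries (natInv p m) *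
        ∏ l ∈ Ioo 0 (m + 1), hstarFactor p l := by
  have hcons (i : ℕ) (l : List ℕ) :
      (if 2 ≤ ((i + 1) :: l).headI then hstarTerm p p ((i + 1) :: l) else 0) =
        ∑ m ∈ Ioo 0 p, (natInv p m ^ (i + 1) * if 1 ≤ i then Polynomial.X ^ 2 else 0) *
          hstarTerm p (m + 1) l := by
    rw [List.headI_cons, hstarTerm_cons]
    simp only [blockWeight, Nat.reduceLeDiff]
    split_ifs <;> simp
  rw [admissibleSeries, compositionSeries_eq_C_add_X_mul hcons]
  rw [List.headI_nil, if_neg (by simp), map_zero, zero_add, mul_sum]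
  refine sum_congr rfl fun m _ ↦ ?_
  rw [mk_pow_succ_mul_ite, ← hstarSeries_succ, hstarSeries]
  ring

lemma sum_Izero_eq_coeff_admissibleSeries (k s : ℕ) :
    ∑ c ∈ Izero k s, Hps p c.blocks = (coeff k (admissibleSeries p)).coeff (2 * s) := by
  rw [admissibleSeries, compositionSeries, coeff_mk, Polynomial.finsetSum_coeff, Izero, sum_filter]
  refine sum_congr rfl fun c _ ↦ ?_
  have hheight : (c.blocks.filter fun x ↦ 2 ≤ x).length = s ↔ 2 * s = 2 * height c.blocks := by
    rw [height]; omega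
  simp only [ite_and, hheight]
  split_ifs <;> simp_all [hstarTerm, Hps, Polynomial.coeff_X_pow]

end HarmonicSeries

section RisingFactorial

open Polynomial

variable {R : Type*}

/-- The rising factorial `(z)ₙ = z (z + 1) ⋯ (z + n - 1)`. -/
noncomputable def rising [Semiring R] (z : R) (n : ℕ) : R := (ascPochhammer R n).eval z

@[simp]
lemma rising_zero [Semiring R] (z : R) : rising z 0 = 1 := by simp [rising]

lemma rising_succ [Semiring R] (z : R) (n : ℕ) : rising z (n + 1) = rising z n * (z + n) :=
  ascPochhammer_succ_eval n z

lemma rising_add [CommSemiring R] (z : R) (m n : ℕ) :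
    rising z (m + n) = rising z m * rising (z + m) n := by
  rw [rising, ← ascPochhammer_mul]
  simp [rising]

lemma rising_succ_left [CommSemiring R] (z : R) (n : ℕ) :
    rising z (n + 1) = z * rising (z + 1) n := by
  rw [add_comm, rising_add]
  simp [rising]

lemma rising_eq_prod_range [CommSemiring R] (z : R) (n : ℕ) :
    rising z n = ∏ l ∈ range n, (z + l) := by
  induction n with
  | zero => simp
  | succ n ih => rw [rising_succ, prod_range_succ, ih]

/-- The Chu–Vandermonde identity. -/
lemma sum_range_choose_mul_rising_mul_rising [CommRing R] (b c : R) (N : ℕ) :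
    ∑ i ∈ range (N + 1), (-1) ^ i * N.choose i * rising b i * rising (c + i) (N - i) =
      rising (c - b) N := by
  have hdesc (z : R) (n : ℕ) : (descPochhammer ℤ n).smeval z = rising (z - n + 1) n := by
    rw [descPochhammer_smeval_eq_ascPochhammer, ascPochhammer_smeval_eq_eval, rising]
  have hneg (i : ℕ) : (descPochhammer ℤ i).smeval (-b) = (-1) ^ i * rising b i := by
    rw [hdesc, rising, ← descPochhammer_eval_eq_ascPochhammer, rising, ← neg_neg b,
      ascPochhammer_eval_neg_eq_descPochhammer, ← mul_assoc, ← mul_pow]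
    simp
  have vandermonde := Ring.descPochhammer_smeval_add N (Commute.all (-b) (c + N - 1))
  rw [Nat.sum_antidiagonal_eq_sum_range_succ_mk, hdesc,
    show -b + (c + N - 1) - N + 1 = c - b by ring] at vandermonde
  rw [vandermonde]
  refine sum_congr rfl fun i hi ↦ ?_
  have hi : i ≤ N := Nat.lt_succ_iff.mp (mem_range.mp hi)
  rw [hneg, hdesc, Nat.cast_sub hi, show c + N - 1 - (N - i) + 1 = c + i by ring]
  ring

lemma ascPochhammer_zmod_prime (p : ℕ) [Fact p.Prime] :
    ascPochhammer (ZMod p) p = X ^ p - X := by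
  have hp : 1 < p := (Fact.out : p.Prime).one_lt
  have hdeg : (X ^ p - X : (ZMod p)[X]).natDegree = p :=
    FiniteField.X_pow_card_sub_X_natDegree_eq (ZMod p) hp
  have hmonic : (X ^ p - X : (ZMod p)[X]).Monic :=
    (monic_X_pow p).sub_of_left (by rw [degree_X_pow, degree_X]; exact_mod_cast hp)
  have hdeg_asc : (ascPochhammer (ZMod p) p).degree = p := by
    rw [degree_eq_natDegree (monic_ascPochhammer _ _).ne_zero, ascPochhammer_natDegree]
  refine eq_of_degree_le_of_eval_finset_eq univ ?_ ?_ ?_ fun a _ ↦ ?_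
  · rw [hdeg_asc, card_univ, ZMod.card]
  · rw [hdeg_asc, degree_eq_natDegree hmonic.ne_zero, hdeg]
  · rw [hmonic.leadingCoeff, (monic_ascPochhammer _ _).leadingCoeff]
  · rw [(ascPochhammer_eval_eq_zero_iff p a).mpr
      ⟨(-a).val, ZMod.val_lt _, ZMod.natCast_zmod_val _⟩]
    simp

lemma rising_prime {K : Type*} [CommRing K] (p : ℕ) [Fact p.Prime] [CharP K p] (z : K) :
    rising z p = z ^ p - z := by
  rw [rising, ascPochhammer_eval₂ (ZMod.castHom dvd_rfl K), ascPochhammer_zmod_prime]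
  simp

lemma rising_prime_split {K : Type*} [CommRing K] (p : ℕ) [Fact p.Prime] [CharP K p] (z : K)
    {r N : ℕ} (hrN : r + N + 1 = p) :
    rising z r * (z + r) * rising (z + r + 1) N = z ^ p - z := by
  rw [← rising_prime p, ← rising_succ z r, show p = r + 1 + N by omega,
    rising_add z (r + 1), Nat.cast_add_one, add_assoc]

/-- In characteristic `p`, `(r + i choose i) = (-1)ⁱ (p - 1 - r choose i)`. -/
lemma natCast_factorial_add {K : Type*} [CommRing K] (p : ℕ) [CharP K p] {r N : ℕ}
    (hrN : r + N + 1 = p) {i : ℕ} (hi : i ≤ N) :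
    ((r + i).factorial : K) = (-1) ^ i * r.factorial * i.factorial * N.choose i := by
  induction i with
  | zero => simp
  | succ i ih =>
    have hchoose : (N.choose (i + 1) * (i + 1) : K) = N.choose i * (N - i) := by
      rw [← Nat.cast_add_one, ← Nat.cast_sub (by omega), ← Nat.cast_mul, ← Nat.cast_mul,
        Nat.choose_succ_right_eq]
    have hp : (r + N + 1 : K) = 0 := by
      rw [← CharP.cast_eq_zero K p, ← hrN]; push_cast; ring
    rw [← add_assoc, Nat.factorial_succ, Nat.factorial_succ, Nat.cast_mul, ih (by omega)]
    push_cast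
    linear_combination (-1) ^ i * r.factorial * i.factorial * hchoose +
      (-1) ^ i * r.factorial * i.factorial * N.choose i * hp

lemma prod_range_erase_sq_sub_sq [CommRing R] (y : R) (r i : ℕ) :
    ∏ l ∈ (range (r + i + 1)).erase r, ((y + l) ^ 2 - (y + r) ^ 2) =
      (-1) ^ r * r.factorial * i.factorial * rising (2 * y + r) r *
        rising (2 * y + 2 * r + 1) i := by
  induction i with
  | zero =>
    rw [add_zero, range_add_one, erase_insert notMem_range_self]
    have hfactor (l) (hl : l ∈ range r) :
        (y + l) ^ 2 - (y + r) ^ 2 = (-1 * ((r - l : ℕ) : R)) * (2 * y + r + l) := by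
      rw [Nat.cast_sub (mem_range.mp hl).le]; ring
    rw [prod_congr rfl hfactor, prod_mul_distrib, prod_mul_distrib, prod_const, card_range,
      ← rising_eq_prod_range, ← Nat.cast_prod]
    have hfac : ∏ l ∈ range r, (r - l) = r.factorial := by
      rw [← Nat.descFactorial_eq_prod_range, Nat.descFactorial_self]
    simp [hfac]
  | succ i ih =>
    have hne : r + i + 1 ≠ r := by omega
    rw [← add_assoc, range_add_one, erase_insert_of_ne hne,
      prod_insert (by simp), ih, rising_succ, Nat.factorial_succ]
    push_cast
    ring

end RisingFactorial

section ResidueSum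

variable {K : Type*} [Field K] {p : ℕ} [Fact p.Prime] [CharP K p]

lemma natCast_mul_add_natCast_ne_zero {y : K} (hy : y ^ p ≠ y) {a : ℕ} (ha : (a : K) ≠ 0) (l : ℕ) :
    a * y + l ≠ 0 := by
  intro h
  have hfrob : a * y ^ p + l = 0 := by
    simpa only [map_add, map_mul, map_natCast, map_zero, frobenius_def] using
      congrArg (frobenius K p) h
  exact hy (mul_left_cancel₀ ha (by linear_combination hfrob - h))

lemma rising_ne_zero {y : K} (hy : y ^ p ≠ y) {a : ℕ} (ha : (a : K) ≠ 0) (m n : ℕ) :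
    rising (a * y + m) n ≠ 0 := by
  rw [rising_eq_prod_range]
  refine prod_ne_zero_iff.mpr fun l _ ↦ ?_
  simpa [add_assoc] using natCast_mul_add_natCast_ne_zero hy ha (m + l)

lemma rising_add_ne_zero {y : K} (hy : y ^ p ≠ y) (m n : ℕ) : rising (y + m) n ≠ 0 := by
  simpa using rising_ne_zero hy (a := 1) (by simp) m n

lemma rising_two_mul_add_ne_zero {y : K} (hy : y ^ p ≠ y) (h2 : (2 : K) ≠ 0) (m n : ℕ) :
    rising (2 * y + m) n ≠ 0 :=
  rising_ne_zero hy (a := 2) h2 m n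

/-- The residue at `t = (y + r) ^ 2` of the term of index `r + i` of the series
`∑ m! (y)ₘ / ∏_{l ≤ m} ((y + l) ^ 2 - t)`, up to sign. -/
noncomputable def residueTerm (y : K) (r i : ℕ) : K :=
  (r + i).factorial * rising y (r + i) *
    ∏ l ∈ (range (r + i + 1)).erase r, ((y + l) ^ 2 - (y + r) ^ 2)⁻¹

lemma residueTerm_eq {y : K} (hy : y ^ p ≠ y) (h2 : (2 : K) ≠ 0) {r N i : ℕ}
    (hrN : r + N + 1 = p) (hi : i ≤ N) :
    residueTerm y r i = (-1) ^ r * rising y r / rising (2 * y + r) r *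
      ((-1) ^ i * N.choose i * rising (y + r) i / rising (2 * y + 2 * r + 1) i) := by
  have hfac (n : ℕ) (hn : n < p) : (n.factorial : K) ≠ 0 := by
    rw [Ne, CharP.cast_eq_zero_iff K p, (Fact.out : p.Prime).dvd_factorial]
    omega
  have := hfac r (by omega)
  have := hfac i (by omega)
  have := rising_two_mul_add_ne_zero hy h2 r r
  have : rising (2 * y + 2 * r + 1) i ≠ 0 := by
    simpa [add_assoc] using rising_two_mul_add_ne_zero hy h2 (2 * r + 1) i
  rw [residueTerm, prod_inv_distrib, prod_range_erase_sq_sub_sq, natCast_factorial_add p hrN hi,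
    rising_add]
  field_simp
  rw [← pow_mul, (even_two.mul_left r).neg_one_pow, mul_one]

lemma rising_mul_rising_eq {y : K} (hy : y ^ p ≠ y) (h2 : (2 : K) ≠ 0) {r N : ℕ}
    (hrN : r + N + 1 = p) :
    rising y r * rising (y + r + 1) N =
      rising (2 * y + r) r * rising (2 * y + 2 * r + 1) N := by
  have hyr : y + r ≠ 0 := by simpa [rising] using rising_add_ne_zero hy r 1
  have split_y := rising_prime_split p y hrN
  have split_two_y := rising_prime_split p (2 * y + r) hrN
  have hfrob : (2 * y + r) ^ p = 2 * y ^ p + r := by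
    simpa only [map_add, map_mul, map_natCast, map_ofNat, frobenius_def] using
      (frobenius_def p (2 * y + r : K)).symm
  rw [hfrob, show 2 * y + r + r = 2 * (y + r) by ring,
    show 2 * (y + r) + 1 = 2 * y + 2 * r + 1 by ring] at split_two_y
  refine mul_left_cancel₀ (mul_ne_zero h2 hyr) ?_
  linear_combination 2 * split_y - split_two_y

lemma sum_residueTerm_eq_neg_one_pow {y : K} (hy : y ^ p ≠ y) (h2 : (2 : K) ≠ 0) {r N : ℕ}
    (hrN : r + N + 1 = p) :
    ∑ i ∈ range (N + 1), residueTerm y r i = (-1) ^ r := by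
  set c := 2 * y + 2 * r + 1 with hc
  have hcN (i n : ℕ) : rising (c + i) n ≠ 0 := by
    simpa [hc, add_assoc] using rising_two_mul_add_ne_zero hy h2 (2 * r + (1 + i)) n
  have hcN₀ (n : ℕ) : rising c n ≠ 0 := by simpa using hcN 0 n
  have vandermonde := sum_range_choose_mul_rising_mul_rising (y + r) c N
  rw [show c - (y + r) = y + r + 1 by rw [hc]; ring] at vandermonde
  have hterm (i) (hi : i ∈ range (N + 1)) : residueTerm y r i =
      (-1) ^ r * rising y r / (rising (2 * y + r) r * rising c N) *
        ((-1) ^ i * N.choose i * rising (y + r) i * rising (c + i) (N - i)) := by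
    have hi : i ≤ N := Nat.lt_succ_iff.mp (mem_range.mp hi)
    have hsplit : rising c N = rising c i * rising (c + i) (N - i) := by
      rw [← rising_add, Nat.add_sub_cancel' hi]
    rw [residueTerm_eq hy h2 hrN hi, ← hc, hsplit]
    have := hcN₀ i
    have := hcN i (N - i)
    have := rising_two_mul_add_ne_zero hy h2 r r
    field_simp
  rw [sum_congr rfl hterm, ← mul_sum, vandermonde, div_mul_eq_mul_div, div_eq_iff
    (mul_ne_zero (rising_two_mul_add_ne_zero hy h2 r r) (hcN₀ N)), mul_assoc,
    rising_mul_rising_eq hy h2 hrN]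

lemma residueTerm_last {y : K} (hy : y ^ p ≠ y) (h2 : (2 : K) ≠ 0) {r N : ℕ}
    (hrN : r + N + 1 = p) :
    residueTerm y r N = (y + r) / (y - 1) := by
  have hp : p ≠ 2 := by rintro rfl; exact h2 (CharP.cast_eq_zero K 2)
  have sign : (-1 : K) ^ r * (-1) ^ N = 1 := by
    rw [← pow_add, show r + N = p - 1 by omega]
    exact ((Fact.out : p.Prime).even_sub_one hp).neg_one_pow
  have hrN_cast : (r + N + 1 : K) = 0 := by rw [← CharP.cast_eq_zero K p, ← hrN]; push_cast; ring
  have shift : (y + r) * rising (y + r + 1) N = rising (y + r) N * (y - 1) := by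
    rw [← rising_succ_left, rising_succ]
    linear_combination rising (y + r) N * hrN_cast
  have hy1 : y - 1 ≠ 0 := by
    intro h
    simp [sub_eq_zero.mp h] at hy
  have hden := mul_ne_zero (rising_two_mul_add_ne_zero hy h2 r r)
    (by simpa [add_assoc] using rising_two_mul_add_ne_zero hy h2 (2 * r + 1) N :
      rising (2 * y + 2 * r + 1) N ≠ 0)
  rw [residueTerm_eq hy h2 hrN le_rfl, Nat.choose_self, Nat.cast_one, mul_one, div_mul_div_comm,
    div_eq_div_iff hden hy1, ← rising_mul_rising_eq hy h2 hrN]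
  linear_combination rising y r * rising (y + r) N * (y - 1) * sign - rising y r * shift

lemma sum_range_residueTerm {y : K} (hy : y ^ p ≠ y) (h2 : (2 : K) ≠ 0) {r N : ℕ}
    (hrN : r + N + 1 = p) :
    ∑ i ∈ range N, residueTerm y r i = (-1) ^ r - (y + r) / (y - 1) := by
  rw [eq_sub_iff_add_eq, ← residueTerm_last hy h2 hrN, ← sum_range_succ,
    sum_residueTerm_eq_neg_one_pow hy h2 hrN]

end ResidueSum

section PartialFractions

variable {K : Type*} [Field K]

lemma prod_inv_sub_eq_sum_partialFractions {ι : Type*} [DecidableEq ι] {s : Finset ι}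
    (hs : s.Nonempty) {v : ι → K} (hv : Set.InjOn v s) {t : K} (ht : ∀ l ∈ s, v l ≠ t) :
    ∏ l ∈ s, (v l - t)⁻¹ = ∑ r ∈ s, (∏ l ∈ s.erase r, (v l - v r)⁻¹) * (v r - t)⁻¹ := by
  have hneg : Set.InjOn (fun l ↦ -v l) s := fun a ha b hb h ↦ hv ha hb (neg_injective h)
  have hprod : ∏ l ∈ s, (-t - -v l) = ∏ l ∈ s, (v l - t) := prod_congr rfl fun l _ ↦ by ring
  have lagrange := congrArg (Polynomial.eval (-t)) (Lagrange.sum_basis hneg hs)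
  rw [Polynomial.eval_finsetSum, Polynomial.eval_one, sum_congr rfl fun r hr ↦
    Lagrange.eval_basis_not_at_node hr fun h ↦ ht r hr (neg_injective h).symm, ← mul_sum,
    Lagrange.eval_nodal, hprod] at lagrange
  rw [prod_inv_distrib, inv_eq_of_mul_eq_one_right lagrange]
  refine sum_congr rfl fun r _ ↦ ?_
  rw [Lagrange.nodalWeight]
  congr 1
  · exact prod_congr rfl fun l _ ↦ by congr 1; ring
  · congr 1; ring

variable {p : ℕ} [Fact p.Prime] [CharP K p]

lemma injOn_add_natCast_sq {y : K} (hy : y ^ p ≠ y) (h2 : (2 : K) ≠ 0) :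
    Set.InjOn (fun l : ℕ ↦ (y + l) ^ 2) (range p) := by
  intro a ha b hb hab
  have hsum : 2 * y + (a + b) ≠ 0 := by
    simpa using natCast_mul_add_natCast_ne_zero hy (a := 2) h2 (a + b)
  have hcast : (a : K) = b := by
    refine sub_eq_zero.mp ((mul_eq_zero.mp ?_).resolve_right hsum)
    linear_combination hab
  exact CharP.natCast_injOn_Iio K p (by simpa using ha) (by simpa using hb) hcast

lemma sum_factorial_mul_rising_mul_prod_inv {y t : K} (hy : y ^ p ≠ y) (h2 : (2 : K) ≠ 0)
    (ht : ∀ l < p - 1, (y + l) ^ 2 ≠ t) :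
    ∑ m ∈ range (p - 1), m.factorial * rising y m * ∏ l ∈ range (m + 1), ((y + l) ^ 2 - t)⁻¹ =
      ∑ r ∈ range (p - 1), ((-1) ^ r - (y + r) / (y - 1)) * ((y + r) ^ 2 - t)⁻¹ := by
  have expand (m) (hm : m ∈ range (p - 1)) :
      m.factorial * rising y m * ∏ l ∈ range (m + 1), ((y + l) ^ 2 - t)⁻¹ =
        ∑ r ∈ range (m + 1), residueTerm y r (m - r) * ((y + r) ^ 2 - t)⁻¹ := by
    have hm := mem_range.mp hm
    have hsub : range (m + 1) ⊆ range p := range_subset_range.mpr (by omega)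
    rw [prod_inv_sub_eq_sum_partialFractions nonempty_range_add_one
      ((injOn_add_natCast_sq hy h2).mono (coe_subset.mpr hsub))
      fun l hl ↦ ht l (by have := mem_range.mp hl; omega), mul_sum]
    refine sum_congr rfl fun r hr ↦ ?_
    have hr : r ≤ m := Nat.lt_succ_iff.mp (mem_range.mp hr)
    rw [residueTerm, Nat.add_sub_cancel' hr, mul_assoc _ _ (((y + r) ^ 2 - t)⁻¹)]
  rw [sum_congr rfl expand, sum_comm' (t' := range (p - 1)) (s' := fun r ↦ Ico r (p - 1))
    (by simp only [mem_range, mem_Ico]; omega)]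
  refine sum_congr rfl fun r hr ↦ ?_
  rw [← sum_mul, sum_Ico_eq_sum_range]
  simp only [Nat.add_sub_cancel_left]
  rw [sum_range_residueTerm hy h2 (by have := mem_range.mp hr; omega)]

@[to_additive]
lemma prod_Ioo_zero_eq_prod_range {M : Type*} [CommMonoid M] (f : ℕ → M) (n : ℕ) :
    ∏ m ∈ Ioo 0 n, f m = ∏ m ∈ range (n - 1), f (m + 1) := by
  rw [show Ioo 0 n = Ico 1 n from rfl, prod_Ico_eq_prod_range]
  simp only [add_comm 1]

lemma div_mul_prod_Ioo_eq_factorial_mul_rising {x : K} {m : ℕ} (hm : ((m + 1 : ℕ) : K) ≠ 0)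
    (hmx : ((m + 1 : ℕ) : K) - x ≠ 0) (c : K) :
    c / ((m + 1 : ℕ) * ((m + 1 : ℕ) - x)) *
        ∏ l ∈ Ioo 0 (m + 1 + 1), (l * (l - x)) / ((l - x) ^ 2 - c) =
      c * (m.factorial * rising (1 - x) m * ∏ l ∈ range (m + 1), ((1 - x + l) ^ 2 - c)⁻¹) := by
  have hnum : ∏ l ∈ range (m + 1), (((l + 1 : ℕ) : K) * ((l + 1 : ℕ) - x)) =
      (m + 1 : ℕ) * ((m + 1 : ℕ) - x) * (m.factorial * rising (1 - x) m) := by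
    rw [prod_mul_distrib, ← Nat.cast_prod, prod_range_add_one_eq_factorial, Nat.factorial_succ,
      prod_congr rfl fun l _ ↦ show ((l + 1 : ℕ) : K) - x = 1 - x + l by push_cast; ring,
      ← rising_eq_prod_range, rising_succ]
    push_cast
    ring
  have hden : ∏ l ∈ range (m + 1), ((((l + 1 : ℕ) : K) - x) ^ 2 - c)⁻¹ =
      ∏ l ∈ range (m + 1), ((1 - x + l) ^ 2 - c)⁻¹ :=
    prod_congr rfl fun l _ ↦ by push_cast; ring
  simp only [prod_Ioo_zero_eq_prod_range, Nat.add_sub_cancel, div_eq_mul_inv _ (_ - c)]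
  rw [prod_mul_distrib, hnum, hden]
  field_simp

lemma two_mul_sum_mul_prod_eq {x z : K} (hx : x ^ p ≠ x) (h2 : (2 : K) ≠ 0)
    (hxz : ∀ m ∈ Ioo 0 p, ((m : K) - x) ^ 2 ≠ (z * x) ^ 2) :
    2 * ∑ m ∈ Ioo 0 p, (z * x) ^ 2 / (m * (m - x)) *
        ∏ l ∈ Ioo 0 (m + 1), (l * (l - x)) / ((l - x) ^ 2 - (z * x) ^ 2) =
      x * (z * ∑ m ∈ Ioo 0 p, (-1) ^ (m + 1) *
          ((m - (1 + z) * x)⁻¹ - (m - (1 - z) * x)⁻¹) +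
        z ^ 2 * ∑ m ∈ Ioo 0 p, ((m - (1 + z) * x)⁻¹ + (m - (1 - z) * x)⁻¹)) := by
  have hx₀ : x ≠ 0 := by rintro rfl; simp [(Fact.out : p.Prime).ne_zero] at hx
  have hy : (1 - x) ^ p ≠ 1 - x := by
    rw [sub_pow_char, one_pow]; exact fun h ↦ hx (sub_right_injective h)
  have hyxz (l) (hl : l < p - 1) : (1 - x + l) ^ 2 ≠ (z * x) ^ 2 := by
    have := hxz (l + 1) (by rw [mem_Ioo]; omega)
    rwa [Nat.cast_add_one, show (l + 1 - x : K) = 1 - x + l by ring] at this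
  have hne (m) (hm : m ∈ range (p - 1)) : ((m + 1 : ℕ) : K) ≠ 0 :=
    natCast_ne_zero_of_lt p m.succ_ne_zero (by have := mem_range.mp hm; omega)
  have hnex (m : ℕ) : ((m + 1 : ℕ) : K) - x ≠ 0 := by
    rw [Nat.cast_add_one, show (m + 1 - x : K) = 1 - x + m by ring]
    simpa using natCast_mul_add_natCast_ne_zero hy (a := 1) (by simp) m
  simp only [sum_Ioo_zero_eq_sum_range]
  rw [sum_congr rfl fun m hm ↦ div_mul_prod_Ioo_eq_factorial_mul_rising (hne m hm) (hnex m) _,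
    ← mul_sum, sum_factorial_mul_rising_mul_prod_inv hy h2 hyxz]
  simp only [mul_sum, ← sum_add_distrib]
  refine sum_congr rfl fun r hr ↦ ?_
  have hfactor : (1 - x + r) ^ 2 - (z * x) ^ 2 =
      ((r + 1 : ℕ) - (1 + z) * x) * ((r + 1 : ℕ) - (1 - z) * x) := by push_cast; ring
  obtain ⟨hplus, hminus⟩ := mul_ne_zero_iff.mp
    (hfactor ▸ sub_ne_zero.mpr (hyxz r (mem_range.mp hr)))
  rw [inv_sub_inv hplus hminus, inv_add_inv hplus hminus, hfactor, show 1 - x - 1 = -x by ring]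
  generalize ((r + 1 : ℕ) - (1 + z) * x) * ((r + 1 : ℕ) - (1 - z) * x) = d
  push_cast
  field_simp
  ring

end PartialFractions

section GeneratingFunctionIdentity

open scoped Polynomial PowerSeries
open PowerSeries

/-- The power series `(m - e X)⁻¹`. -/
noncomputable def fractionSeries (p : ℕ) (e : (ZMod p)[X]) (m : ℕ) : (ZMod p)[X]⟦X⟧ :=
  C (natInv p m) * geomSeries (e * natInv p m)

variable {p : ℕ} [Fact p.Prime]

section RationalFunctions

variable {K : Type*} [Field K] (φ : (ZMod p)[X]⟦X⟧ →+* K)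

lemma map_C_natInv (m : ℕ) : φ (C (natInv p m)) = (m : K)⁻¹ := by
  have h := map_inv₀ (φ.comp (C.comp Polynomial.C)) (m : ZMod p)
  rwa [map_natCast] at h

lemma map_fractionSeries {m : ℕ} (hm : (m : K) ≠ 0) (e : (ZMod p)[X]) :
    φ (fractionSeries p e m) = (m - φ (C e) * φ X)⁻¹ := by
  rw [fractionSeries, map_mul, map_geomSeries, map_mul, map_mul, map_C_natInv, ← mul_inv]
  congr 1
  field_simp

lemma map_hstarFactor {m : ℕ} (hm : (m : K) ≠ 0) :
    φ (hstarFactor p m) =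
      m * (m - φ X) / ((m - φ X) ^ 2 - (φ (C Polynomial.X) * φ X) ^ 2) := by
  have hfrac (e : K) : (1 - e * (m : K)⁻¹ * φ X)⁻¹ = m * (m - e * φ X)⁻¹ := by
    rw [show 1 - e * (m : K)⁻¹ * φ X = (m : K)⁻¹ * (m - e * φ X) by field_simp, mul_inv, inv_inv]
  rw [hstarFactor, map_mul, map_mul, map_geomSeries, map_geomSeries]
  simp only [map_mul, map_sub, map_add, map_one, map_C_natInv]
  rw [hfrac, hfrac, show ((m : K) - φ X) ^ 2 - (φ (C Polynomial.X) * φ X) ^ 2 =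
    (m - (1 + φ (C Polynomial.X)) * φ X) * (m - (1 - φ (C Polynomial.X)) * φ X) by ring,
    div_eq_mul_inv, mul_inv]
  field_simp

lemma map_admissibleSeries [CharP K p] :
    φ (admissibleSeries p) = ∑ m ∈ Ioo 0 p,
      (φ (C Polynomial.X) * φ X) ^ 2 / (m * (m - φ X)) * ∏ l ∈ Ioo 0 (m + 1),
        l * (l - φ X) / ((l - φ X) ^ 2 - (φ (C Polynomial.X) * φ X) ^ 2) := by
  rw [admissibleSeries_eq, map_sum]
  refine sum_congr rfl fun m hm ↦ ?_
  have hne {l : ℕ} (hl : l ∈ Ioo 0 (m + 1)) : (l : K) ≠ 0 := by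
    rw [mem_Ioo] at hl hm
    exact natCast_ne_zero_of_lt p (by omega) (by omega)
  have hm₀ : (m : K) ≠ 0 := hne (by rw [mem_Ioo] at hm ⊢; omega)
  have hgeom := map_fractionSeries φ hm₀ 1
  rw [fractionSeries, one_mul, map_one, map_one, one_mul, map_mul, map_C_natInv] at hgeom
  rw [map_mul, map_prod, prod_congr rfl fun l hl ↦ map_hstarFactor φ (hne hl)]
  congr 1
  simp only [map_mul, map_pow, map_C_natInv]
  rw [div_eq_mul_inv, mul_inv, ← hgeom]
  ring

end RationalFunctions

lemma X_pow_prime_ne_X : (X : (ZMod p)[X]⟦X⟧) ^ p ≠ X := fun h ↦ by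
  simpa [coeff_X_pow, (Fact.out : p.Prime).ne_one.symm] using congrArg (coeff 1) h

lemma natCast_sub_X_sq_ne {m : ℕ} (hm : m ∈ Ioo 0 p) :
    ((m : (ZMod p)[X]⟦X⟧) - X) ^ 2 ≠ (C Polynomial.X * X) ^ 2 := fun h ↦ by
  have hm := mem_Ioo.mp hm
  have := congrArg constantCoeff h
  simp only [map_pow, map_sub, map_natCast, constantCoeff_X, map_mul, mul_zero, sub_zero,
    zero_pow two_ne_zero] at this
  exact natCast_ne_zero_of_lt p hm.1.ne' hm.2 (pow_eq_zero_iff two_ne_zero |>.mp this)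

lemma two_mul_admissibleSeries (hp : p ≠ 2) :
    2 * admissibleSeries p = X * (C Polynomial.X * ∑ m ∈ Ioo 0 p, (-1) ^ (m + 1) *
        (fractionSeries p (1 + Polynomial.X) m - fractionSeries p (1 - Polynomial.X) m) +
      C Polynomial.X ^ 2 * ∑ m ∈ Ioo 0 p,
        (fractionSeries p (1 + Polynomial.X) m + fractionSeries p (1 - Polynomial.X) m)) := by
  let φ := algebraMap (ZMod p)[X]⟦X⟧ (FractionRing (ZMod p)[X]⟦X⟧)
  have hφ : Function.Injective φ := IsFractionRing.injective _ _
  have : CharP (FractionRing (ZMod p)[X]⟦X⟧) p :=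
    charP_of_injective_ringHom (φ.comp (C.comp Polynomial.C)).injective p
  have hx : φ X ^ p ≠ φ X := by
    rw [← map_pow]; exact hφ.ne X_pow_prime_ne_X
  have h2 : (2 : FractionRing (ZMod p)[X]⟦X⟧) ≠ 0 := Ring.two_ne_zero (by rwa [ringChar.eq _ p])
  have hxz (m) (hm : m ∈ Ioo 0 p) : (m - φ X) ^ 2 ≠ (φ (C Polynomial.X) * φ X) ^ 2 := by
    simpa using hφ.ne (natCast_sub_X_sq_ne hm)
  have hfrac (m) (hm : m ∈ Ioo 0 p) (e : (ZMod p)[X]) :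
      φ (fractionSeries p e m) = (m - φ (C e) * φ X)⁻¹ :=
    map_fractionSeries φ (natCast_ne_zero_of_lt p (mem_Ioo.mp hm).1.ne' (mem_Ioo.mp hm).2) e
  apply hφ
  simp only [map_mul, map_add, map_sub, map_pow, map_sum, map_neg, map_one, map_ofNat]
  rw [map_admissibleSeries, two_mul_sum_mul_prod_eq hx h2 hxz]
  congr 3 <;> refine sum_congr rfl fun m hm ↦ ?_ <;> rw [hfrac m hm, hfrac m hm] <;> simp

lemma coeff_fractionSeries (e : (ZMod p)[X]) (m j : ℕ) :
    coeff j (fractionSeries p e m) = Polynomial.C ((m : ZMod p)⁻¹ ^ (j + 1)) * e ^ j := by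
  rw [fractionSeries, coeff_C_mul, geomSeries, coeff_mk, map_pow]
  ring

lemma two_mul_coeff_admissibleSeries {j : ℕ} (hj : j + 2 < p) :
    2 * coeff (j + 1) (admissibleSeries p) =
      Polynomial.X * (Polynomial.C (∑ m ∈ Ioo 0 p, (-1) ^ (m + 1) * (m : ZMod p)⁻¹ ^ (j + 1)) *
        ((1 + Polynomial.X) ^ j - (1 - Polynomial.X) ^ j)) := by
  have hsign (m : ℕ) : (-1 : (ZMod p)[X]⟦X⟧) ^ (m + 1) = C (Polynomial.C ((-1) ^ (m + 1))) := by
    simp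
  have hplain : ∑ m ∈ Ioo 0 p, coeff j
      (fractionSeries p (1 + Polynomial.X) m + fractionSeries p (1 - Polynomial.X) m) = 0 := by
    simp only [map_add, coeff_fractionSeries, ← mul_add]
    rw [← sum_mul, ← map_sum, sum_inv_pow_eq_zero j.succ_ne_zero (by omega), map_zero,
      zero_mul]
  have halternating : ∑ m ∈ Ioo 0 p, coeff j ((-1) ^ (m + 1) *
      (fractionSeries p (1 + Polynomial.X) m - fractionSeries p (1 - Polynomial.X) m)) =
        Polynomial.C (∑ m ∈ Ioo 0 p, (-1) ^ (m + 1) * (m : ZMod p)⁻¹ ^ (j + 1)) *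
          ((1 + Polynomial.X) ^ j - (1 - Polynomial.X) ^ j) := by
    rw [map_sum, sum_mul]
    refine sum_congr rfl fun m _ ↦ ?_
    rw [hsign, coeff_C_mul, map_sub, coeff_fractionSeries, coeff_fractionSeries, ← mul_sub,
      ← mul_assoc, ← map_mul]
  rw [← coeff_C_mul, map_ofNat, two_mul_admissibleSeries (by omega), coeff_succ_X_mul, map_add,
    ← map_pow, coeff_C_mul, coeff_C_mul, map_sum, map_sum, hplain, halternating, mul_zero, add_zero]

lemma coeff_one_sub_X_pow {R : Type*} [CommRing R] (j i : ℕ) :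
    ((1 - Polynomial.X : R[X]) ^ j).coeff i = (-1) ^ i * (j.choose i : R) := by
  have : (1 - Polynomial.X : R[X]) ^ j =
      ((1 + Polynomial.X) ^ j).comp (Polynomial.C (-1) * Polynomial.X) := by
    simp [sub_eq_add_neg]
  rw [this, Polynomial.comp_C_mul_X_coeff, Polynomial.coeff_one_add_X_pow, mul_comm]

lemma sum_Izero_eq_choose_mul_sum {k s : ℕ} (hs : 1 ≤ s) (hk : 1 ≤ k) (hkp : k + 1 < p) :
    ∑ c ∈ Izero k s, Hps p c.blocks =
      (k - 1).choose (2 * s - 1) * ∑ m ∈ Ioo 0 p, (-1) ^ (m + 1) * (m : ZMod p)⁻¹ ^ k := by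
  obtain ⟨j, rfl⟩ := Nat.exists_eq_add_of_le' hk
  obtain ⟨u, rfl⟩ := Nat.exists_eq_add_of_le' hs
  have h2 : ((2 : ℕ) : ZMod p) ≠ 0 := natCast_ne_zero_of_lt p two_ne_zero (by omega)
  have h := congrArg (fun f ↦ f.coeff (2 * u + 1 + 1)) (two_mul_coeff_admissibleSeries hkp)
  simp only [Polynomial.coeff_X_mul, Polynomial.coeff_C_mul, Polynomial.coeff_ofNat_mul,
    Polynomial.coeff_sub, Polynomial.coeff_one_add_X_pow, coeff_one_sub_X_pow] at h
  rw [sum_Izero_eq_coeff_admissibleSeries]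
  refine mul_left_cancel₀ h2 ?_
  rw [Odd.neg_one_pow ⟨u, rfl⟩] at h
  rw [show 2 * (u + 1) - 1 = 2 * u + 1 by omega, Nat.add_sub_cancel]
  push_cast
  linear_combination h

end GeneratingFunctionIdentity

section BernoulliModP

open scoped Polynomial PowerSeries

/-- The subring of `ℚ` of rationals whose denominator is prime to `p`, on which the cast to
`ZMod p` is reduction modulo `p`. -/
abbrev ratIntegersAt (p : ℕ) [Fact p.Prime] : Subring ℚ := (Rat.padicValuation p).integer

variable {p : ℕ} [Fact p.Prime]

lemma mem_ratIntegersAt_iff {q : ℚ} : q ∈ ratIntegersAt p ↔ (q.den : ZMod p) ≠ 0 := by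
  rw [Valuation.mem_integer_iff, Rat.padicValuation_le_one_iff, Ne, ZMod.natCast_eq_zero_iff]

/-- Reduction modulo `p` of the rationals with denominator prime to `p`. -/
def ratResidue : ratIntegersAt p →+* ZMod p where
  toFun q := (q : ℚ)
  map_zero' := by simp
  map_one' := by simp
  map_add' q r := Rat.cast_add_of_ne_zero
    (mem_ratIntegersAt_iff.mp q.2) (mem_ratIntegersAt_iff.mp r.2)
  map_mul' q r := Rat.cast_mul_of_ne_zero
    (mem_ratIntegersAt_iff.mp q.2) (mem_ratIntegersAt_iff.mp r.2)

lemma inv_natCast_mem_ratIntegersAt {n : ℕ} (hn : (n : ZMod p) ≠ 0) :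
    (n : ℚ)⁻¹ ∈ ratIntegersAt p := by
  have hn₀ : n ≠ 0 := by rintro rfl; simp at hn
  simpa [mem_ratIntegersAt_iff, hn₀] using hn

lemma ratCast_div_natCast {q : ℚ} (hq : q ∈ ratIntegersAt p) {n : ℕ} (hn : (n : ZMod p) ≠ 0) :
    ((q / n : ℚ) : ZMod p) = q / n := by
  have hinv : (((n : ℚ)⁻¹ : ℚ) : ZMod p) = (n : ZMod p)⁻¹ := by
    simp
  rw [div_eq_mul_inv, Rat.cast_mul_of_ne_zero (mem_ratIntegersAt_iff.mp hq)
    (mem_ratIntegersAt_iff.mp (inv_natCast_mem_ratIntegersAt hn)), hinv, div_eq_mul_inv]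

lemma bernoulli'_mem_ratIntegersAt {n : ℕ} (hn : n + 1 < p) :
    bernoulli' n ∈ ratIntegersAt p := by
  induction n using Nat.strong_induction_on with
  | _ n ih =>
    rw [bernoulli'_def]
    refine sub_mem (one_mem _) (sum_mem fun k hk ↦ ?_)
    have hk := mem_range.mp hk
    have hden : ((n - k + 1 : ℕ) : ZMod p) ≠ 0 :=
      natCast_ne_zero_of_lt p (by omega) (by omega)
    have hinv := inv_natCast_mem_ratIntegersAt hden
    rw [Nat.cast_add_one, Nat.cast_sub hk.le] at hinv
    rw [div_eq_mul_inv]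
    exact mul_mem (mul_mem (natCast_mem _ _) hinv) (ih k hk (by omega))

lemma bernoulli_mem_ratIntegersAt {n : ℕ} (hn : n + 1 < p) :
    bernoulli n ∈ ratIntegersAt p := by
  rw [bernoulli]
  exact mul_mem (pow_mem (neg_mem (one_mem _)) n) (bernoulli'_mem_ratIntegersAt hn)

lemma coeff_bernoulli_mem_ratIntegersAt {n : ℕ} (hn : n + 1 < p) (i : ℕ) :
    (Polynomial.bernoulli n).coeff i ∈ ratIntegersAt p := by
  rw [Polynomial.coeff_bernoulli]
  split_ifs with hi
  · exact mul_mem (bernoulli_mem_ratIntegersAt (by omega)) (natCast_mem _ _)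
  · exact zero_mem (ratIntegersAt p)

lemma ratCast_eval_congr {f : ℚ[X]} (hf : ∀ i, f.coeff i ∈ ratIntegersAt p) {a b : ℚ}
    (ha : a ∈ ratIntegersAt p) (hb : b ∈ ratIntegersAt p) (hab : (a : ZMod p) = b) :
    ((f.eval a : ℚ) : ZMod p) = (f.eval b : ℚ) := by
  obtain ⟨g, rfl⟩ : ∃ g : (ratIntegersAt p)[X], g.map (ratIntegersAt p).subtype = f :=
    (Polynomial.mem_lifts f).mp ((Polynomial.lifts_iff_coeff_lifts f).mpr fun i ↦ ⟨⟨_, hf i⟩, rfl⟩)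
  have heval (c : ratIntegersAt p) :
      (((g.map (ratIntegersAt p).subtype).eval (c : ℚ) : ℚ) : ZMod p) =
        (g.map ratResidue).eval (c : ZMod p) := by
    have hc : (g.map (ratIntegersAt p).subtype).eval (c : ℚ) = (g.eval c : ratIntegersAt p) :=
      Polynomial.eval_map_apply (ratIntegersAt p).subtype c
    rw [hc]
    exact (Polynomial.eval_map_apply ratResidue c).symm
  rw [heval ⟨a, ha⟩, heval ⟨b, hb⟩, hab]

lemma eval_mem_ratIntegersAt {f : ℚ[X]} (hf : ∀ i, f.coeff i ∈ ratIntegersAt p) {a : ℚ}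
    (ha : a ∈ ratIntegersAt p) : f.eval a ∈ ratIntegersAt p := by
  rw [Polynomial.eval_eq_sum_range]
  exact sum_mem fun i _ ↦ mul_mem (hf i) (pow_mem ha i)

lemma two_pow_mul_bernoulli_eval_half_add (n : ℕ) :
    2 ^ n * ((Polynomial.bernoulli n).eval (1 / 2) + bernoulli n) =
      2 * bernoulli n := by
  have hcast : bernoulliFun n 2⁻¹ = ((Polynomial.bernoulli n).eval (1 / 2) : ℚ) := by
    have h := Polynomial.eval_map_apply (p := Polynomial.bernoulli n) (algebraMap ℚ ℝ) (1 / 2)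
    simpa [bernoulliFun] using h
  have half := bernoulliFun_eval_half n
  rw [hcast] at half
  field_simp at half
  have : (2 : ℝ) ^ n * (((Polynomial.bernoulli n).eval (1 / 2) : ℚ) + (bernoulli n : ℚ)) =
      2 * (bernoulli n : ℚ) := by linear_combination half
  exact_mod_cast this

lemma sum_range_neg_one_pow_mul_add_sum {R : Type*} [CommRing R] (f : ℕ → R) (h : ℕ) :
    ∑ n ∈ range (2 * h + 1), (-1) ^ n * f n + ∑ n ∈ range (2 * h + 1), f n =
      2 * ∑ j ∈ range (h + 1), f (2 * j) := by
  induction h with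
  | zero => simp; ring
  | succ h ih =>
    rw [show 2 * (h + 1) + 1 = 2 * h + 1 + 1 + 1 by ring, sum_range_succ, sum_range_succ,
      sum_range_succ _ (2 * h + 1 + 1), sum_range_succ _ (2 * h + 1),
      sum_range_succ _ (h + 1)]
    have hodd : (-1 : R) ^ (2 * h + 1) = -1 := Odd.neg_one_pow ⟨h, rfl⟩
    rw [pow_succ _ (2 * h + 1), hodd]
    linear_combination ih

lemma one_half_mem_ratIntegersAt (hp : p ≠ 2) : (1 / 2 : ℚ) ∈ ratIntegersAt p := by
  have h2 : ((2 : ℕ) : ZMod p) ≠ 0 := by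
    exact_mod_cast Ring.two_ne_zero (by rwa [ZMod.ringChar_zmod_n])
  simpa using inv_natCast_mem_ratIntegersAt h2

lemma ratCast_bernoulli_eval_half {n : ℕ} (hp : p ≠ 2) (hn : n + 1 < p) :
    2 ^ n * ((((Polynomial.bernoulli n).eval (1 / 2) : ℚ) : ZMod p) + (bernoulli n : ℚ)) =
      2 * (bernoulli n : ℚ) := by
  let B : ratIntegersAt p := ⟨bernoulli n, bernoulli_mem_ratIntegersAt hn⟩
  let B_half : ratIntegersAt p := ⟨(Polynomial.bernoulli n).eval (1 / 2),
    eval_mem_ratIntegersAt (coeff_bernoulli_mem_ratIntegersAt hn) (one_half_mem_ratIntegersAt hp)⟩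
  have h : 2 ^ n * (B_half + B) = 2 * B := Subtype.ext (two_pow_mul_bernoulli_eval_half_add n)
  have h_residue := congrArg ratResidue h
  simp only [map_mul, map_add, map_pow, map_ofNat] at h_residue
  exact h_residue

/-- Faulhaber's formula up to `(p - 1) / 2`, whose successor is `1 / 2` modulo `p`. -/
lemma succ_mul_sum_range_half_pow {h q : ℕ} (hh : p = 2 * h + 1) (hq : q + 2 < p) :
    (q + 1) * ∑ j ∈ range (h + 1), (j : ZMod p) ^ q =
      (((Polynomial.bernoulli (q + 1)).eval (1 / 2) : ℚ) : ZMod p) - (bernoulli (q + 1) : ℚ) := by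
  have hcoeff := coeff_bernoulli_mem_ratIntegersAt hq
  have half_mem : (1 / 2 : ℚ) ∈ ratIntegersAt p := one_half_mem_ratIntegersAt (by omega)
  have succ_mem : ((h + 1 : ℕ) : ℚ) ∈ ratIntegersAt p := natCast_mem _ _
  have hhalf : (((h + 1 : ℕ) : ℚ) : ZMod p) = ((1 / 2 : ℚ) : ZMod p) := by
    have hp : ((2 * h + 1 : ℕ) : ZMod p) = 0 := by simp [← hh]
    have h2 : ((2 : ℕ) : ZMod p) ≠ 0 := natCast_ne_zero_of_lt p two_ne_zero (by omega)
    have := ratCast_div_natCast (one_mem (ratIntegersAt p)) h2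
    push_cast at hp h2 this
    rw [this, Rat.cast_natCast, Nat.cast_add_one]
    field_simp
    linear_combination hp
  have faulhaber := Polynomial.sum_range_pow_eq_bernoulli_sub (h + 1) q
  rw [← ratCast_eval_congr hcoeff succ_mem half_mem hhalf, ← Rat.cast_sub_of_ne_zero
    (mem_ratIntegersAt_iff.mp (eval_mem_ratIntegersAt hcoeff succ_mem))
    (mem_ratIntegersAt_iff.mp (bernoulli_mem_ratIntegersAt hq)), ← Nat.succ_eq_add_one q,
    ← faulhaber]
  norm_cast

lemma succ_mul_sum_range_neg_one_pow_mul_pow {q : ℕ} (hp : p ≠ 2) (hq : q + 2 < p) :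
    (q + 1) * ∑ m ∈ range p, (-1) ^ m * (m : ZMod p) ^ q =
      2 * (1 - 2 ^ (q + 1)) * (bernoulli (q + 1) : ℚ) := by
  obtain ⟨h, hh⟩ := (Fact.out : p.Prime).odd_of_ne_two hp
  have to_half := sum_range_neg_one_pow_mul_add_sum (fun n ↦ (n : ZMod p) ^ q) h
  rw [← hh, sum_range_natCast_pow_eq_zero (by omega)] at to_half
  simp only [Nat.cast_mul, mul_pow, ← mul_sum, Nat.cast_ofNat, add_zero] at to_half
  linear_combination (q + 1 : ZMod p) * to_half + 2 ^ (q + 1) * succ_mul_sum_range_half_pow hh hq +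
    ratCast_bernoulli_eval_half hp hq

lemma sum_neg_one_pow_mul_inv_pow {k : ℕ} (hk : 2 ≤ k) (hkp : k + 1 < p) :
    ∑ m ∈ Ioo 0 p, (-1) ^ (m + 1) * (m : ZMod p)⁻¹ ^ k =
      2 * (1 - 2 ^ (1 - k : ℤ)) * ((bernoulli (p - k) / k : ℚ) : ZMod p) := by
  obtain ⟨q, hq⟩ : ∃ q, p = q + 1 + k := ⟨p - 1 - k, by omega⟩
  have hk₀ : (k : ZMod p) ≠ 0 := natCast_ne_zero_of_lt p (by omega) (by omega)
  have h2 : (2 : ZMod p) ≠ 0 := by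
    exact_mod_cast natCast_ne_zero_of_lt (K := ZMod p) p two_ne_zero (by omega)
  have hsucc : (q + 1 : ZMod p) = -k := by
    have : ((q + 1 + k : ℕ) : ZMod p) = 0 := by simp [← hq]
    push_cast at this
    linear_combination this
  have hpow : (2 : ZMod p) ^ (1 - k : ℤ) = 2 ^ (q + 1) := by
    rw [zpow_sub₀ h2, zpow_one, zpow_natCast, div_eq_mul_inv, ← inv_pow,
      inv_pow_eq_pow_sub h2 (by omega), show p - 1 - k = q by omega, pow_succ']
  have alternating := succ_mul_sum_range_neg_one_pow_mul_pow (p := p) (q := q) (by omega) (by omega)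
  rw [hsucc] at alternating
  rw [sum_mul_inv_pow_eq_sum_range (fun m ↦ (-1) ^ (m + 1)) (by omega) hq, hpow,
    ratCast_div_natCast (bernoulli_mem_ratIntegersAt (by omega)) hk₀,
    show p - k = q + 1 by omega, ← mul_div_assoc, eq_div_iff hk₀]
  simp only [pow_succ (-1 : ZMod p), mul_neg_one, neg_mul, sum_neg_distrib]
  linear_combination alternating

end BernoulliModP

end AokiOhno

/-- Finite analogue of the Aoki–Ohno relation:
`∑_{𝐤 ∈ I₀(k,s)} H_p^⋆(𝐤) ≡ 2 binom(k-1,2s-1)(1-2^{1-k}) B_{p-k}/k (mod p)`. -/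
theorem stmt_12 (k s : ℕ) (hk : 2 ≤ k) (hs : 1 ≤ s) (hks : 2 * s ≤ k)
    (p : ℕ) [Fact p.Prime] (hp : k + 2 < p) :
    ∑ c ∈ Izero k s, Hps p c.blocks =
      2 * ((k - 1).choose (2 * s - 1) : ZMod p) * (1 - (2 : ZMod p) ^ ((1 : ℤ) - k)) *
        ((bernoulli (p - k) / k : ℚ) : ZMod p) := by
  rw [AokiOhno.sum_Izero_eq_choose_mul_sum hs (by omega) (by omega),
    AokiOhno.sum_neg_one_pow_mul_inv_pow hk (by omega)]
  ring
end

section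
/- Fix k ≥ 2 and s ≥ 1 with k ≥ 2s. For each prime p > k+2, the sum ∑_{𝐤 ∈ I_0(k,s)} (-1)^{dep(𝐤)} H_p(𝐤) is congruent modulo p to 2·binom(k-1, 2s-1)·(1 - 2^{1-k})·B_{p-k}/k, where H_p(k_1,...,k_r) = ∑_{p>m_1>⋯>m_r>0} ∏ m_i^{-k_i}, dep denotes the depth (number of components), and I_0(k,s) is the set of indices with first component > 1, weight k, and height s. -/
/-- Auxiliary strict truncated multiple harmonic sum. -/
def HAux (p : ℕ) : ℕ → List ℕ → ZMod p
  | _, [] => 1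
  | N, k :: ks => ∑ m ∈ Finset.Ioo 0 N, ((m : ZMod p))⁻¹ ^ k * HAux p m ks

/-- `H_p(k₁,…,k_r) = ∑_{p > m₁ > ⋯ > m_r > 0} ∏ᵢ mᵢ^{-kᵢ}` in `ℤ/pℤ`. -/
def Hp (p : ℕ) (ks : List ℕ) : ZMod p := HAux p p ks

/-! Give each component greater than `1` the weight `-y²` and each component `1` the weight `-1`,
and sum over all indices with a variable `X` marking the weight. Once the largest summation variable
is fixed, the sum over the remaining variables is a product, so the generating function is a
`₂F₁` at `1` truncated at `p`, with parameters `-(1 ± y) X` and `-X`. The characteristic `p` form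
of Gauss's summation theorem expresses that series as an alternating sum of partial fractions. Both
sides are polynomials of degree less than `p` in `w = (y X)²`, and at the `p` nodes `w = (n - X)²`
they agree: one side is a Chu–Vandermonde sum, the other has a single nonzero term. Modulo
`X ^ (p - 1)` the product in the denominator is `1`, and comparing coefficients leaves
`∑ (-1) ^ m m⁻ᵏ` times a binomial coefficient. By Faulhaber's formula up to `(p + 1) / 2 ≡ 1 / 2`
this alternating sum is governed by `B_{p-k}(1/2)`, hence by `B_{p-k}`. -/

open Finset
open scoped Polynomial PowerSeries

section PartSeries

open PowerSeries

variable {K R : Type*} [Field K] [CommRing R] [Algebra K R]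

/-- The generating function `∑_{i ≥ 1} e i · a⁻ⁱ Xⁱ` of the possible contributions of one summation
variable `a` to a multiple harmonic sum whose components `i` carry the weight `e i`. -/
noncomputable def partSeries (a : K) (e : ℕ → R) : R⟦X⟧ :=
  X * .mk fun i => a⁻¹ ^ (i + 1) • e (i + 1)

theorem coeff_succ_partSeries (a : K) (e : ℕ → R) (n : ℕ) :
    coeff (n + 1) (partSeries a e) = a⁻¹ ^ (n + 1) • e (n + 1) := by
  rw [partSeries, coeff_succ_X_mul, coeff_mk]

theorem constantCoeff_partSeries (a : K) (e : ℕ → R) : constantCoeff (partSeries a e) = 0 := by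
  simp [partSeries]

theorem algebraMap_mul_partSeries {a : K} (ha : a ≠ 0) (e : ℕ → R) :
    algebraMap K R⟦X⟧ a * partSeries a e = X * (C (e 1) + partSeries a fun i => e (i + 1)) := by
  ext n
  rw [← Algebra.smul_def, coeff_smul]
  rcases n with _ | _ | n
  · simp [constantCoeff_partSeries]
  · simp [coeff_succ_partSeries, coeff_succ_X_mul, constantCoeff_partSeries, ha]
  · rw [coeff_succ_partSeries, coeff_succ_X_mul, map_add, coeff_succ_partSeries, coeff_C,
      if_neg n.succ_ne_zero, zero_add, smul_smul, pow_succ' _ (n + 1), mul_inv_cancel_left₀ ha]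

theorem partSeries_const_mul (a : K) (b : R) (e : ℕ → R) :
    partSeries a (fun i => b * e i) = C b * partSeries a e := by
  ext (_ | n)
  · simp [constantCoeff_partSeries]
  · rw [coeff_C_mul, coeff_succ_partSeries, coeff_succ_partSeries, mul_smul_comm]

theorem sub_X_mul_partSeries_pow {a : K} (ha : a ≠ 0) (c : R) :
    (algebraMap K R⟦X⟧ a - C c * X) * partSeries a (fun i => c ^ (i - 1)) = X := by
  have hrec : algebraMap K R⟦X⟧ a * partSeries a (fun i => c ^ (i - 1)) =
      X * (1 + C c * partSeries a fun i => c ^ (i - 1)) := by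
    rw [algebraMap_mul_partSeries ha, ← partSeries_const_mul]
    congr 2
    · simp
    · ext (_ | n)
      · simp [constantCoeff_partSeries]
      · simp [coeff_succ_partSeries, pow_succ' c]
  linear_combination hrec

theorem mul_sub_X_mul_partSeries {a : K} (ha : a ≠ 0) {e : ℕ → R} (he : ∀ i, 2 ≤ i → e i = e 2) :
    algebraMap K R⟦X⟧ a * (algebraMap K R⟦X⟧ a - X) * partSeries a e =
      C (e 1) * X * (algebraMap K R⟦X⟧ a - X) + C (e 2) * X ^ 2 := by
  have hconst : (partSeries a fun i => e (i + 1)) =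
      C (e 2) * partSeries a fun i => (1 : R) ^ (i - 1) := by
    rw [← partSeries_const_mul]
    ext (_ | n)
    · simp only [coeff_zero_eq_constantCoeff_apply, constantCoeff_partSeries]
    · simp only [coeff_succ_partSeries, he (n + 1 + 1) (by lia), one_pow, mul_one]
  have hrec := algebraMap_mul_partSeries ha e
  have hgeom := sub_X_mul_partSeries_pow ha (1 : R)
  rw [hconst] at hrec
  rw [map_one] at hgeom
  linear_combination (algebraMap K R⟦X⟧ a - X) * hrec + X * C (e 2) * hgeom

end PartSeries

section HarmonicSeries

open PowerSeries

theorem sum_composition_succ {M : Type*} [AddCommMonoid M] (n : ℕ) (F : List ℕ → M) :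
    ∑ c : Composition (n + 1), F c.blocks =
      ∑ ij ∈ antidiagonal n, ∑ c : Composition ij.2, F ((ij.1 + 1) :: c.blocks) := by
  rw [sum_sigma']
  symm
  refine sum_bij (fun x hx => ⟨(x.1.1 + 1) :: x.2.blocks, fun h => ?_, ?_⟩)
    (fun _ _ => mem_univ _) ?_ ?_ fun _ _ => rfl
  · rcases List.mem_cons.1 h with rfl | h
    exacts [Nat.succ_pos _, x.2.blocks_pos h]
  · rw [List.sum_cons, x.2.blocks_sum, ← mem_antidiagonal.1 (mem_sigma.1 hx).1]
    lia
  · rintro ⟨⟨i, j⟩, c⟩ h ⟨⟨i', j'⟩, c'⟩ h' e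
    simp only [Composition.mk.injEq, List.cons.injEq, add_left_inj] at e
    obtain ⟨rfl, e⟩ := e
    obtain rfl : j = j' := c.blocks_sum.symm.trans ((congrArg List.sum e).trans c'.blocks_sum)
    rw [Composition.ext e]
  · rintro ⟨_ | ⟨i, l⟩, hpos, hsum⟩ _
    · simp at hsum
    · have hi : 0 < i := hpos (by simp)
      rw [List.sum_cons] at hsum
      exact ⟨⟨(i - 1, l.sum), ⟨l, fun h => hpos (by simp [h]), rfl⟩⟩,
        by simp only [mem_sigma, HasAntidiagonal.mem_antidiagonal, mem_univ, and_true]; lia,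
        by ext1; simp only [Nat.sub_add_cancel hi]⟩

theorem HAux_cons (p N k : ℕ) (ks : List ℕ) :
    HAux p N (k :: ks) = ∑ m ∈ Ico 1 N, (m : ZMod p)⁻¹ ^ k * HAux p m ks := by
  rw [HAux, ← Ico_add_one_left_eq_Ioo, zero_add]

variable {R : Type*} [CommRing R]

/-- The generating function `∑ₖ (∑_{c ⊨ k} HAux p N c · ∏ᵢ e (cᵢ)) Xᵏ` of the truncated multiple
harmonic sums whose components `i` carry the weight `e i`. -/
noncomputable def harmonicSeries (p : ℕ) [Algebra (ZMod p) R] (e : ℕ → R) (N : ℕ) : R⟦X⟧ :=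
  .mk fun k => ∑ c : Composition k, HAux p N c.blocks • (c.blocks.map e).prod

variable {p : ℕ} [Fact p.Prime] [Algebra (ZMod p) R]

theorem sum_HAux_smul_headI_tail (e₀ e : ℕ → R) (N n : ℕ) :
    ∑ c : Composition (n + 1),
        HAux p N c.blocks • (e₀ c.blocks.headI * (c.blocks.tail.map e).prod) =
      coeff (n + 1) (∑ m ∈ Ico 1 N, partSeries (m : ZMod p) e₀ * harmonicSeries p e m) := by
  rw [sum_composition_succ n fun l => HAux p N l • (e₀ l.headI * (l.tail.map e).prod), map_sum]
  simp only [coeff_mul, Nat.sum_antidiagonal_succ, coeff_zero_eq_constantCoeff_apply,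
    constantCoeff_partSeries, coeff_succ_partSeries, harmonicSeries, coeff_mk, zero_mul, zero_add,
    HAux_cons, List.headI_cons, List.tail_cons, mul_sum, sum_smul, sum_const_zero]
  rw [sum_comm (s := Ico 1 N)]
  refine sum_congr rfl fun ij _ => ?_
  rw [sum_comm]
  simp only [smul_mul_smul_comm]

theorem harmonicSeries_eq_one_add_sum (e : ℕ → R) (N : ℕ) :
    harmonicSeries p e N =
      1 + ∑ m ∈ Ico 1 N, partSeries (m : ZMod p) e * harmonicSeries p e m := by
  ext (_ | n)
  · have hnil (c : Composition 0) : c.blocks = [] := c.blocks_eq_nil.2 rfl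
    simp [harmonicSeries, constantCoeff_partSeries, hnil, HAux, composition_card]
  · rw [map_add, ← sum_HAux_smul_headI_tail, coeff_one, if_neg n.succ_ne_zero, zero_add,
      harmonicSeries, coeff_mk]
    refine sum_congr rfl fun c _ => ?_
    obtain ⟨i, l, hc⟩ := List.exists_cons_of_ne_nil (c.blocks_eq_nil.not.2 n.succ_ne_zero)
    rw [hc, List.map_cons, List.prod_cons, List.headI_cons, List.tail_cons]

theorem harmonicSeries_eq_prod (e : ℕ → R) (N : ℕ) :
    harmonicSeries p e N = ∏ m ∈ Ico 1 N, (1 + partSeries (m : ZMod p) e) := by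
  induction N using Nat.strong_induction_on with
  | _ N ih =>
    rw [harmonicSeries_eq_one_add_sum, prod_one_add_ordered]
    congr 1
    refine sum_congr rfl fun m hm => ?_
    have hm' := mem_Ico.1 hm
    rw [ih m hm'.2]
    congr 2
    ext j
    simp only [mem_filter, mem_Ico]
    lia

end HarmonicSeries

section HeightSeries

open PowerSeries

variable {R : Type*} [CommRing R]

/-- The weight `-y²` of a component greater than `1` and `-1` of a component `1`; the product over
an index `𝐤` is `(-1) ^ dep 𝐤 * y ^ (2 * height 𝐤)`. -/
def heightWeight (y : R) (i : ℕ) : R := if 2 ≤ i then -y ^ 2 else -1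

/-- The variant of `heightWeight` for the first component, which excludes the value `1`. -/
def leadWeight (y : R) (i : ℕ) : R := if 2 ≤ i then -y ^ 2 else 0

theorem prod_map_heightWeight (y : R) (l : List ℕ) :
    (l.map (heightWeight y)).prod =
      (-1) ^ l.length * y ^ (2 * (l.filter fun x => 2 ≤ x).length) := by
  induction l with
  | nil => simp
  | cons i l ih => by_cases hi : 2 ≤ i <;> simp [heightWeight, hi, ih] <;> ring

theorem leadWeight_headI_mul_prod (y : R) (l : List ℕ) :
    leadWeight y l.headI * (l.tail.map (heightWeight y)).prod =
      if 2 ≤ l.headI then (-1) ^ l.length * y ^ (2 * (l.filter fun x => 2 ≤ x).length) else 0 := by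
  rcases l with _ | ⟨i, l⟩
  · simp [leadWeight]
  · rw [← prod_map_heightWeight, List.map_cons, List.prod_cons, List.headI_cons, List.tail_cons,
      heightWeight, leadWeight, ite_mul, ite_mul, zero_mul]
    split_ifs <;> rfl

/-- The generating function `∑_{k, s} (∑_{𝐤 ∈ I₀(k,s)} (-1) ^ dep 𝐤 * H_p(𝐤)) y²ˢ Xᵏ`, summed over
the largest summation variable `m = m₁`: each `j < m` occurs or not among `m₂ > ⋯ > m_r`. -/
noncomputable def heightSeries (p : ℕ) [Fact p.Prime] [Algebra (ZMod p) R] (y : R) : R⟦X⟧ :=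
  ∑ m ∈ Ico 1 p, partSeries (m : ZMod p) (leadWeight y) *
    ∏ j ∈ Ico 1 m, (1 + partSeries (j : ZMod p) (heightWeight y))

theorem sum_Izero_eq_coeff_heightSeries (p : ℕ) [Fact p.Prime] {k : ℕ} (hk : k ≠ 0) (s : ℕ) :
    ∑ c ∈ Izero k s, (-1 : ZMod p) ^ c.length * Hp p c.blocks =
      (coeff k (heightSeries p (.X : (ZMod p)[X]))).coeff (2 * s) := by
  obtain ⟨n, rfl⟩ := Nat.exists_eq_succ_of_ne_zero hk
  simp only [heightSeries, ← harmonicSeries_eq_prod, Nat.succ_eq_add_one,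
    ← sum_HAux_smul_headI_tail, leadWeight_headI_mul_prod, Polynomial.finsetSum_coeff]
  rw [Izero, sum_filter]
  refine sum_congr rfl fun c _ => ?_
  rw [Polynomial.coeff_smul, smul_eq_mul]
  by_cases hhead : 2 ≤ c.blocks.headI
  · rw [if_pos hhead, ← map_one Polynomial.C, ← map_neg, ← map_pow, Polynomial.coeff_C_mul_X_pow,
      c.blocks_length, Hp, mul_comm]
    simp only [hhead, true_and, mul_ite, mul_zero, Nat.mul_right_inj two_ne_zero, eq_comm]
  · simp [hhead]

end HeightSeries

section FiniteField

open Polynomial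

variable (K : Type*) [Field K] [Fintype K]

theorem prod_univ_X_sub_C : ∏ a : K, (X - C a) = X ^ Fintype.card K - X := by
  have hroots := FiniteField.roots_X_pow_card_sub_X K
  have hdeg := FiniteField.X_pow_card_sub_X_natDegree_eq K (Fintype.one_lt_card (α := K))
  have hmonic : (X ^ Fintype.card K - X : K[X]).Monic :=
    monic_X_pow_sub (by simpa using Fintype.one_lt_card)
  have hprod := prod_multiset_X_sub_C_of_monic_of_roots_card_eq hmonic
    (by rw [hroots, hdeg, card_val, card_univ])
  rwa [hroots] at hprod

variable {K} {S : Type*} [CommRing S] [Algebra K S] [DecidableEq K]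

theorem prod_erase_sub_algebraMap (b : K) (x : S) :
    ∏ a ∈ univ.erase b, (x - algebraMap K S a) =
      (x - algebraMap K S b) ^ (Fintype.card K - 1) - 1 := by
  have hshift : (X - C b) * ∏ a ∈ univ.erase b, (X - C a) =
      (X - C b) * ((X - C b) ^ (Fintype.card K - 1) - 1) := by
    calc (X - C b) * ∏ a ∈ univ.erase b, (X - C a) = ∏ a : K, (X - C a) :=
          mul_prod_erase _ (fun a : K => X - C a) (mem_univ b)
      _ = ∏ a : K, (X - C b - C a) := by
          rw [← Equiv.prod_comp (Equiv.addLeft b)]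
          simp only [Equiv.coe_addLeft, map_add, sub_add_eq_sub_sub]
      _ = (∏ a : K, (X - C a)).comp (X - C b) := by
          simp only [Polynomial.prod_comp, sub_comp, X_comp, C_comp]
      _ = _ := by
          rw [prod_univ_X_sub_C, sub_comp, X_pow_comp, X_comp, mul_sub_one,
            mul_pow_sub_one Fintype.card_ne_zero]
  simpa using congrArg (aeval x) (mul_left_cancel₀ (X_sub_C_ne_zero b) hshift)

end FiniteField

section Residues

variable {p : ℕ} [Fact p.Prime]

theorem natCast_zmod_ne_zero {m : ℕ} (hm : m ∈ Ico 1 p) : (m : ZMod p) ≠ 0 := by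
  rw [Ne, ZMod.natCast_eq_zero_iff]
  exact Nat.not_dvd_of_pos_of_lt (mem_Ico.1 hm).1 (mem_Ico.1 hm).2

theorem zmod_two_ne_zero (hp : p ≠ 2) : (2 : ZMod p) ≠ 0 :=
  Ring.two_ne_zero (by rwa [ringChar.eq (ZMod p) p])

theorem sum_range_natCast_zmod {M : Type*} [AddCommMonoid M] (f : ZMod p → M) :
    ∑ j ∈ range p, f j = ∑ a, f a :=
  sum_bij' (fun j _ => j) (fun a _ => a.val) (fun _ _ => mem_univ _)
    (fun a _ => mem_range.2 a.val_lt) (fun _ hj => ZMod.val_cast_of_lt (mem_range.1 hj))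
    (fun a _ => ZMod.natCast_zmod_val a) fun _ _ => rfl

variable {S : Type*} [CommRing S] [Algebra (ZMod p) S]

theorem prod_range_erase_sub_natCast {n : ℕ} (hn : n < p) (x : S) :
    ∏ j ∈ (range p).erase n, (x - j) = (x - n) ^ (p - 1) - 1 := by
  have h := prod_erase_sub_algebraMap (n : ZMod p) x
  have hinj : Set.InjOn (Nat.cast : ℕ → ZMod p) (Set.Iio p) := CharP.natCast_injOn_Iio (ZMod p) p
  rw [ZMod.card, map_natCast] at h
  rw [← h]
  refine prod_nbij (fun j => (j : ZMod p)) (fun j hj => ?_) (fun i hi j hj => ?_)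
    (fun a ha => ⟨a.val, ?_, ZMod.natCast_zmod_val a⟩) fun j _ => by rw [map_natCast]
  · rw [mem_erase, mem_range] at hj
    exact mem_erase.2 ⟨fun e => hj.1 (hinj hj.2 hn e), mem_univ _⟩
  · simp only [coe_erase, coe_range] at hi hj
    exact hinj hi.1 hj.1
  · rw [mem_coe, mem_erase, mem_range]
    refine ⟨fun e => ?_, a.val_lt⟩
    simp [← e] at ha

theorem prod_range_erase_natCast_sub {n : ℕ} (hn : n < p) (x : S) :
    ∏ j ∈ (range p).erase n, ((j : S) - x) = (x - n) ^ (p - 1) - 1 := by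
  have hsign : (-1 : S) ^ (p - 1) = 1 := by
    rw [← map_one (algebraMap (ZMod p) S), ← map_neg, ← map_pow,
      ZMod.pow_card_sub_one_eq_one (neg_ne_zero.2 one_ne_zero)]
  calc ∏ j ∈ (range p).erase n, ((j : S) - x) = ∏ j ∈ (range p).erase n, -1 * (x - j) := by
        simp only [neg_one_mul, neg_sub]
    _ = (x - n) ^ (p - 1) - 1 := by
        rw [prod_mul_distrib, prod_const, card_erase_of_mem (mem_range.2 hn), card_range, hsign,
          one_mul, prod_range_erase_sub_natCast hn]

theorem range_erase_zero (N : ℕ) : (range N).erase 0 = Ico 1 N := by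
  ext j
  simp only [mem_erase, mem_range, mem_Ico]
  lia

theorem prod_Ico_one_natCast_sub (x : S) : ∏ j ∈ Ico 1 p, ((j : S) - x) = x ^ (p - 1) - 1 := by
  rw [← range_erase_zero, prod_range_erase_natCast_sub (Fact.out : p.Prime).pos, Nat.cast_zero,
    sub_zero]

end Residues

section ChuVandermonde

variable {S : Type*} [CommRing S]

theorem smeval_descPochhammer_eq_prod (n : ℕ) (r : S) :
    (descPochhammer ℤ n).smeval r = ∏ j ∈ range n, (r - j) := by
  rw [← Polynomial.aeval_eq_smeval, Polynomial.aeval_def, Polynomial.eval₂_eq_eval_map,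
    descPochhammer_map, descPochhammer_eval_eq_prod_range]

theorem prod_Ico_natCast_sub (m n : ℕ) (x : S) :
    ∏ j ∈ Ico (m + 1) (n + 1), ((j : S) - x) = ∏ i ∈ range (n - m), (n - x - i) := by
  rw [prod_Ico_eq_prod_range, Nat.add_sub_add_right, ← prod_range_reflect]
  refine prod_congr rfl fun i hi => ?_
  have hi' := mem_range.1 hi
  rw [show m + 1 + (n - m - 1 - i) = n - i by lia, Nat.cast_sub (by lia)]
  ring

theorem factorial_mul_prod_Ico_natCast {n N : ℕ} (hn : n < N) :
    (n.factorial : S) * ∏ j ∈ Ico (n + 1) N, (j : S) = (N - 1).factorial := by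
  obtain ⟨N, rfl⟩ := Nat.exists_eq_succ_of_ne_zero (Nat.ne_zero_of_lt hn)
  rw [← Nat.cast_prod, ← Nat.cast_mul, ← prod_Ico_id_eq_factorial,
    prod_Ico_consecutive _ (by lia) hn, prod_Ico_id_eq_factorial, Nat.succ_sub_one]

/-- The factor `(j - x)² - w` of the numerators of a truncated hypergeometric series
`∑_m ∏_{j < m} hyperNum x w j / ∏_{0 < j ≤ m} hyperDen x j`; for `w = c²` the numerators are
`(-x - c)_m (-x + c)_m`. -/
def hyperNum (x w : S) (j : ℕ) : S := (j - x) ^ 2 - w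

/-- The factor `j (j - x)` of the denominators in the truncated hypergeometric series of
`hyperNum`. -/
def hyperDen (x : S) (j : ℕ) : S := j * (j - x)

theorem sum_range_succ_prod_hyperNum_mul_prod_hyperDen (n : ℕ) (x : S) :
    ∑ m ∈ range (n + 1), (∏ j ∈ range m, hyperNum x ((n - x) ^ 2) j) *
        ∏ j ∈ Ico (m + 1) (n + 1), hyperDen x j =
      n.factorial * ∏ j ∈ range n, (x - j) := by
  have hvandermonde := Ring.descPochhammer_smeval_add n (.all (2 * x - n) (n - x))
  rw [show 2 * x - n + (n - x) = x by ring] at hvandermonde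
  simp only [smeval_descPochhammer_eq_prod] at hvandermonde
  rw [hvandermonde, Nat.sum_antidiagonal_eq_sum_range_succ_mk, mul_sum]
  refine sum_congr rfl fun m hm => ?_
  have hmn : m ≤ n := Nat.lt_succ_iff.1 (mem_range.1 hm)
  have hfall : ∏ j ∈ range m, ((n : S) - j) = m.factorial * n.choose m := by
    rw [← descPochhammer_eval_eq_prod_range, descPochhammer_eval_eq_descFactorial,
      Nat.descFactorial_eq_factorial_mul_choose, Nat.cast_mul]
  have hfactor (j : ℕ) : hyperNum x ((n - x) ^ 2) j = (n - j) * (2 * x - n - j) := by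
    rw [hyperNum]; ring
  have hfactorial := factorial_mul_prod_Ico_natCast (S := S) (Nat.lt_succ_of_le hmn)
  rw [Nat.succ_sub_one] at hfactorial
  simp only [hfactor, hyperDen, prod_mul_distrib]
  rw [hfall, prod_Ico_natCast_sub, ← hfactorial]
  ring

end ChuVandermonde

section Interpolation

open Polynomial

variable {p : ℕ} [Fact p.Prime] {S : Type*} [CommRing S] [Algebra (ZMod p) S]

theorem prod_range_erase_eq_mul {M : Type*} [CommMonoid M] {n N : ℕ} (hn : n < N) (f : ℕ → M) :
    ∏ j ∈ (range N).erase n, f j = (∏ j ∈ range n, f j) * ∏ j ∈ Ico (n + 1) N, f j := by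
  have hsplit : (range N).erase n = range n ∪ Ico (n + 1) N := by
    ext j
    simp only [mem_erase, mem_range, mem_union, mem_Ico]
    lia
  rw [hsplit, prod_union (disjoint_left.2 fun j hj hj' =>
    (mem_range.1 hj).not_ge (Nat.le_of_succ_le (mem_Ico.1 hj').1))]

theorem sum_range_prime_prod_hyperNum_mul_prod_hyperDen {n : ℕ} (hn : n < p) (x : S) :
    ∑ m ∈ range p, (∏ j ∈ range m, hyperNum x ((n - x) ^ 2) j) *
        ∏ j ∈ Ico (m + 1) p, hyperDen x j =
      -(-1) ^ n * ((x - n) ^ (p - 1) - 1) := by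
  have hwilson : (((p - 1).factorial : ℕ) : S) = -1 := by
    rw [← map_natCast (algebraMap (ZMod p) S), ZMod.wilsons_lemma, map_neg, map_one]
  have hvanish : ∀ m ∈ range p, m ∉ range (n + 1) →
      (∏ j ∈ range m, hyperNum x ((n - x) ^ 2) j) *
        ∏ j ∈ Ico (m + 1) p, hyperDen x j = 0 := fun m _ hm => by
    rw [prod_eq_zero (mem_range.2 (by simpa using hm)) (sub_self _), zero_mul]
  rw [← sum_subset (range_subset_range.2 hn) hvanish, ← prod_range_erase_natCast_sub hn x,
    prod_range_erase_eq_mul hn]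
  calc _ = (∑ m ∈ range (n + 1), (∏ j ∈ range m, hyperNum x ((n - x) ^ 2) j) *
          ∏ j ∈ Ico (m + 1) (n + 1), hyperDen x j) *
            ∏ j ∈ Ico (n + 1) p, hyperDen x j := by
        rw [sum_mul]
        refine sum_congr rfl fun m hm => ?_
        rw [mul_assoc, prod_Ico_consecutive _ (by simpa using hm) hn]
    _ = n.factorial * (∏ j ∈ Ico (n + 1) p, (j : S)) * (∏ j ∈ range n, (-1) * ((j : S) - x)) *
          ∏ j ∈ Ico (n + 1) p, ((j : S) - x) := by
        rw [sum_range_succ_prod_hyperNum_mul_prod_hyperDen]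
        simp only [hyperDen, prod_mul_distrib, neg_one_mul, neg_sub]
        ring
    _ = _ := by
        rw [factorial_mul_prod_Ico_natCast hn, hwilson, prod_mul_distrib, prod_const, card_range]
        ring

theorem alternating_sum_prod_erase_hyperNum (hp : p ≠ 2) {n : ℕ} (hn : n < p) (x : S) :
    ∑ m ∈ range p, (-1) ^ m * ∏ j ∈ (range p).erase m, hyperNum x ((n - x) ^ 2) j =
      -(-1) ^ n * ((x - n) ^ (p - 1) - 1) := by
  have hfermat : (2 : S) ^ (p - 1) = 1 := by
    rw [← map_ofNat (algebraMap (ZMod p) S), ← map_pow,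
      ZMod.pow_card_sub_one_eq_one (zmod_two_ne_zero hp), map_one]
  have hfactor (j : ℕ) :
      hyperNum x ((n - x) ^ 2) j = (j - n) * (j - (2 * x - n)) := by rw [hyperNum]; ring
  rw [sum_eq_single_of_mem n (mem_range.2 hn) fun m _ hm => by
    rw [prod_eq_zero (mem_erase.2 ⟨hm.symm, mem_range.2 hn⟩) (sub_self _), mul_zero]]
  simp only [hfactor, prod_mul_distrib]
  rw [prod_range_erase_natCast_sub hn, prod_range_erase_natCast_sub hn, sub_self,
    zero_pow (Nat.sub_ne_zero_of_lt (Fact.out : p.Prime).one_lt),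
    show 2 * x - n - n = 2 * (x - n) by ring, mul_pow, hfermat]
  ring

theorem prod_C_sub_X_mem_degreeLT {R ι : Type*} [CommRing R] {s : Finset ι} {n : ℕ}
    (hs : s.card < n) (a : ι → R) : ∏ i ∈ s, (C (a i) - X) ∈ degreeLT R n := by
  have hdeg (i : ι) : (C (a i) - X).natDegree ≤ 1 := by compute_degree
  have hprod : (∏ i ∈ s, (C (a i) - X)).natDegree ≤ s.card :=
    (natDegree_prod_le _ _).trans (by simpa using sum_le_card_nsmul s _ 1 fun i _ => hdeg i)
  exact mem_degreeLT.2 (degree_le_natDegree.trans_lt (by exact_mod_cast hprod.trans_lt hs))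

theorem injOn_natCast_sub_X_sq (hp : p ≠ 2) :
    Set.InjOn (fun n : ℕ => ((n : (ZMod p)[X]) - X) ^ 2) (range p) := fun m hm n hn h => by
  have hcast : (m : ZMod p) = n := by
    simpa [derivative_pow, zmod_two_ne_zero hp] using congrArg (fun f => (derivative f).eval 0) h
  exact CharP.natCast_injOn_Iio (ZMod p) p (mem_range.1 hm) (mem_range.1 hn) hcast

theorem sum_prod_hyperNum_mul_prod_hyperDen_eq_alternating_sum (hp : p ≠ 2) (x w : S) :
    ∑ m ∈ range p, (∏ j ∈ range m, hyperNum x w j) *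
        ∏ j ∈ Ico (m + 1) p, hyperDen x j =
      ∑ m ∈ range p, (-1) ^ m * ∏ j ∈ (range p).erase m, hyperNum x w j := by
  let A (j : ℕ) : (ZMod p)[X] := (j - (X : (ZMod p)[X])) ^ 2
  let D (m : ℕ) : (ZMod p)[X] := ∏ j ∈ Ico (m + 1) p, hyperDen X j
  have huniversal : ∑ m ∈ range p, D m • ∏ j ∈ range m, (C (A j) - X) =
      ∑ m ∈ range p, (-1 : (ZMod p)[X]) ^ m • ∏ j ∈ (range p).erase m, (C (A j) - X) := by
    refine eq_of_degrees_lt_of_eval_index_eq (range p) (injOn_natCast_sub_X_sq hp)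
      (mem_degreeLT.1 ?_) (mem_degreeLT.1 ?_) fun n hn => ?_
    · rw [card_range]
      exact sum_mem fun m hm => Submodule.smul_mem _ _
        (prod_C_sub_X_mem_degreeLT (by simpa using hm) A)
    · rw [card_range]
      exact sum_mem fun m hm => Submodule.smul_mem _ _
        (prod_C_sub_X_mem_degreeLT ((card_erase_lt_of_mem hm).trans_eq (card_range p)) A)
    · rw [mem_range] at hn
      have hnode := (sum_range_prime_prod_hyperNum_mul_prod_hyperDen hn (X : (ZMod p)[X])).trans
        (alternating_sum_prod_erase_hyperNum hp hn X).symm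
      simpa [eval_finsetSum, eval_prod, A, D, hyperNum, hyperDen, mul_comm] using hnode
  simpa [eval₂_pow, eval₂_finsetSum, eval₂_finsetProd, smul_eq_C_mul, A, D, hyperNum,
    hyperDen, mul_comm] using
    congrArg (eval₂ (aeval x : (ZMod p)[X] →ₐ[ZMod p] S).toRingHom w) huniversal

end Interpolation

section Truncation

open PowerSeries

variable {p : ℕ} [Fact p.Prime] {R : Type*} [CommRing R] [Algebra (ZMod p) R]

theorem hyperDen_X_mul_partSeries_leadWeight {m : ℕ} (hm : m ∈ Ico 1 p) (y : R) :
    hyperDen X m * partSeries (m : ZMod p) (leadWeight y) = -(C y * X) ^ 2 := by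
  have h := mul_sub_X_mul_partSeries (natCast_zmod_ne_zero hm) (e := leadWeight y)
    fun i hi => by simp [leadWeight, hi]
  rw [map_natCast] at h
  simp only [hyperDen, h, leadWeight, le_refl, if_true, Nat.not_ofNat_le_one, if_false, map_zero,
    map_neg, map_pow]
  ring

theorem hyperDen_X_mul_one_add_partSeries_heightWeight {m : ℕ} (hm : m ∈ Ico 1 p) (y : R) :
    hyperDen X m * (1 + partSeries (m : ZMod p) (heightWeight y)) =
      hyperNum X ((C y * X) ^ 2) m := by
  have h := mul_sub_X_mul_partSeries (natCast_zmod_ne_zero hm) (e := heightWeight y)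
    fun i hi => by simp [heightWeight, hi]
  rw [map_natCast] at h
  simp only [hyperNum, hyperDen, mul_add, h, heightWeight, le_refl, if_true,
    Nat.not_ofNat_le_one, if_false, map_one, map_neg, map_pow]
  ring

theorem prod_hyperDen_mul_heightSeries (y : R) :
    (∏ j ∈ Ico 1 p, hyperDen X j) * heightSeries p y =
      -(C y * X) ^ 2 * ∑ m ∈ Ico 1 p, (∏ j ∈ Ico 1 m, hyperNum X ((C y * X) ^ 2) j) *
        ∏ j ∈ Ico (m + 1) p, hyperDen X j := by
  rw [heightSeries, mul_sum, mul_sum]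
  refine sum_congr rfl fun m hm => ?_
  have hm' := mem_Ico.1 hm
  have hprod : ∏ j ∈ Ico 1 m, hyperNum X ((C y * X) ^ 2) j =
      (∏ j ∈ Ico 1 m, hyperDen X j) *
        ∏ j ∈ Ico 1 m, (1 + partSeries (j : ZMod p) (heightWeight y)) := by
    rw [← prod_mul_distrib]
    refine prod_congr rfl fun j hj => ?_
    rw [hyperDen_X_mul_one_add_partSeries_heightWeight (Ico_subset_Ico_right hm'.2.le hj)]
  rw [hprod, ← hyperDen_X_mul_partSeries_leadWeight hm, ← prod_Ico_consecutive _ hm'.1 hm'.2.le,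
    prod_eq_prod_Ico_succ_bot hm'.2]
  ring

/-- The alternating sum `∑_m (-1) ^ m ∑ₖ m⁻ᵏ ((1 + y) ^ (k - 1) - (1 - y) ^ (k - 1)) Xᵏ`. -/
noncomputable def alternatingSeries (p : ℕ) [Fact p.Prime] [Algebra (ZMod p) R] (y : R) : R⟦X⟧ :=
  ∑ m ∈ Ico 1 p, (-1) ^ m * (partSeries (m : ZMod p) (fun i => (1 + y) ^ (i - 1)) -
    partSeries (m : ZMod p) (fun i => (1 - y) ^ (i - 1)))

theorem prod_hyperNum_mul_alternatingSeries (y : R) :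
    (∏ j ∈ Ico 1 p, hyperNum X ((C y * X) ^ 2) j) * alternatingSeries p y =
      2 * C y * X ^ 2 * ∑ m ∈ Ico 1 p, (-1) ^ m *
        ∏ j ∈ (Ico 1 p).erase m, hyperNum X ((C y * X) ^ 2) j := by
  rw [alternatingSeries, mul_sum, mul_sum]
  refine sum_congr rfl fun m hm => ?_
  have hplus := sub_X_mul_partSeries_pow (natCast_zmod_ne_zero hm) (1 + y)
  have hminus := sub_X_mul_partSeries_pow (natCast_zmod_ne_zero hm) (1 - y)
  rw [map_natCast, map_add, map_one] at hplus
  rw [map_natCast, map_sub, map_one] at hminus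
  rw [← mul_prod_erase _ _ hm, hyperNum]
  linear_combination (∏ j ∈ (Ico 1 p).erase m, hyperNum X ((C y * X) ^ 2) j) * (-1) ^ m *
    ((m - (1 - C y) * X) * hplus - (m - (1 + C y) * X) * hminus)

theorem prod_hyperDen_X : ∏ j ∈ Ico 1 p, hyperDen (X : R⟦X⟧) j = 1 - X ^ (p - 1) := by
  have hzero := prod_Ico_one_natCast_sub (p := p) (0 : R⟦X⟧)
  simp only [sub_zero, zero_pow (Nat.sub_ne_zero_of_lt (Fact.out : p.Prime).one_lt)] at hzero
  simp only [hyperDen, prod_mul_distrib]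
  rw [hzero, prod_Ico_one_natCast_sub]
  ring

theorem X_pow_dvd_prod_hyperNum_sub_one (y : R) :
    X ^ (p - 1) ∣ ∏ j ∈ Ico 1 p, hyperNum (X : R⟦X⟧) ((C y * X) ^ 2) j - 1 := by
  have hfactor (j : ℕ) : hyperNum (X : R⟦X⟧) ((C y * X) ^ 2) j =
      ((j : R⟦X⟧) - (1 + C y) * X) * ((j : R⟦X⟧) - (1 - C y) * X) := by rw [hyperNum]; ring
  simp only [hfactor, prod_mul_distrib]
  rw [prod_Ico_one_natCast_sub, prod_Ico_one_natCast_sub, mul_pow, mul_pow]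
  exact ⟨(1 + C y) ^ (p - 1) * ((1 - C y) ^ (p - 1) * X ^ (p - 1)) - (1 + C y) ^ (p - 1) -
    (1 - C y) ^ (p - 1), by ring⟩

theorem prod_hyperDen_add_eq_prod_hyperNum_add (hp : p ≠ 2) {S : Type*} [CommRing S]
    [Algebra (ZMod p) S] (x w : S) :
    ∏ j ∈ Ico 1 p, hyperDen x j + (x ^ 2 - w) *
        ∑ m ∈ Ico 1 p, (∏ j ∈ Ico 1 m, hyperNum x w j) * ∏ j ∈ Ico (m + 1) p, hyperDen x j =
      ∏ j ∈ Ico 1 p, hyperNum x w j + (x ^ 2 - w) *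
        ∑ m ∈ Ico 1 p, (-1) ^ m * ∏ j ∈ (Ico 1 p).erase m, hyperNum x w j := by
  have hp0 := (Fact.out : p.Prime).pos
  have hzero : hyperNum x w 0 = x ^ 2 - w := by simp [hyperNum]
  have h := sum_prod_hyperNum_mul_prod_hyperDen_eq_alternating_sum hp x w
  rw [sum_range_eq_add_Ico _ hp0, sum_range_eq_add_Ico _ hp0] at h
  rw [mul_sum, mul_sum]
  convert h using 2
  · rw [range_zero, prod_empty, one_mul]
  · refine sum_congr rfl fun m hm => ?_
    rw [prod_range_eq_mul_Ico _ (mem_Ico.1 hm).1, hzero, mul_assoc]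
  · rw [range_erase_zero, pow_zero, one_mul]
  · refine sum_congr rfl fun m hm => ?_
    have hmem : 0 ∈ (range p).erase m :=
      mem_erase.2 ⟨(Nat.ne_of_gt (mem_Ico.1 hm).1).symm, mem_range.2 hp0⟩
    rw [← mul_prod_erase _ _ hmem, erase_right_comm, range_erase_zero, hzero, mul_left_comm]

theorem X_pow_dvd_two_mul_heightSeries_add (hp : p ≠ 2) (y : R) :
    X ^ (p - 1) ∣ C (1 - y ^ 2) * (2 * heightSeries p y + C y * alternatingSeries p y) := by
  have hheight := prod_hyperDen_mul_heightSeries (p := p) y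
  have halternating := prod_hyperNum_mul_alternatingSeries (p := p) y
  have hgauss := prod_hyperDen_add_eq_prod_hyperNum_add hp (X : R⟦X⟧) ((C y * X) ^ 2)
  obtain ⟨V, hV⟩ := X_pow_dvd_prod_hyperNum_sub_one (p := p) y
  rw [sub_eq_iff_eq_add] at hV
  rw [prod_hyperDen_X] at hheight hgauss
  rw [hV] at halternating hgauss
  refine ⟨2 * (1 - C y ^ 2) * heightSeries p y - (1 - C y ^ 2) * C y * V * alternatingSeries p y -
    2 * C y ^ 2 * (1 + V), ?_⟩
  rw [map_sub, map_one, map_pow]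
  linear_combination 2 * (1 - C y ^ 2) * hheight + (1 - C y ^ 2) * C y * halternating -
    2 * C y ^ 2 * hgauss

end Truncation

section AlternatingCoefficients

variable {p : ℕ} [Fact p.Prime]

theorem coeff_succ_alternatingSeries {R : Type*} [CommRing R] [Algebra (ZMod p) R] (y : R)
    (n : ℕ) :
    PowerSeries.coeff (n + 1) (alternatingSeries p y) =
      (∑ m ∈ Ico 1 p, (-1) ^ m * (m : ZMod p)⁻¹ ^ (n + 1)) • ((1 + y) ^ n - (1 - y) ^ n) := by
  rw [alternatingSeries, map_sum, sum_smul]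
  refine sum_congr rfl fun m _ => ?_
  rw [← map_one PowerSeries.C, ← map_neg, ← map_pow, PowerSeries.coeff_C_mul, map_sub,
    coeff_succ_partSeries, coeff_succ_partSeries, Nat.add_sub_cancel, ← smul_sub, mul_smul,
    Algebra.smul_def ((-1) ^ m), map_pow, map_neg, map_one]

open Polynomial

theorem coeff_one_add_X_pow_sub_one_sub_X_pow {R : Type*} [CommRing R] (n i : ℕ) :
    ((1 + X) ^ n - (1 - X) ^ n : R[X]).coeff (2 * i + 1) = 2 * (n.choose (2 * i + 1) : R) := by
  have hcomp : (1 - X : R[X]) ^ n = ((1 + X) ^ n).comp (C (-1) * X) := by simp [sub_eq_add_neg]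
  rw [coeff_sub, hcomp, comp_C_mul_X_coeff, coeff_one_add_X_pow, pow_succ, pow_mul, neg_one_sq,
    one_pow]
  ring

theorem two_mul_coeff_heightSeries_X (hp : p ≠ 2) {k : ℕ} (hk : k + 1 < p) :
    2 * PowerSeries.coeff k (heightSeries p (X : (ZMod p)[X])) =
      -X * PowerSeries.coeff k (alternatingSeries p X) := by
  have hdvd := PowerSeries.X_pow_dvd_iff.1
    (X_pow_dvd_two_mul_heightSeries_add hp (X : (ZMod p)[X])) k (by lia)
  have hX : (1 - X ^ 2 : (ZMod p)[X]) ≠ 0 := by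
    rw [← neg_sub, neg_ne_zero, ← C_1]
    exact X_pow_sub_C_ne_zero two_pos 1
  rw [PowerSeries.coeff_C_mul, mul_eq_zero, or_iff_right hX, map_add, PowerSeries.coeff_C_mul,
    ← map_ofNat PowerSeries.C, PowerSeries.coeff_C_mul] at hdvd
  linear_combination hdvd

theorem sum_Izero_eq_neg_choose_mul_alternating_sum (hp : p ≠ 2) {k s : ℕ} (hk : k ≠ 0)
    (hkp : k + 1 < p) (hs : s ≠ 0) :
    ∑ c ∈ Izero k s, (-1 : ZMod p) ^ c.length * Hp p c.blocks =
      -((k - 1).choose (2 * s - 1) : ZMod p) * ∑ m ∈ Ico 1 p, (-1) ^ m * (m : ZMod p)⁻¹ ^ k := by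
  obtain ⟨n, rfl⟩ := Nat.exists_eq_succ_of_ne_zero hk
  obtain ⟨i, rfl⟩ := Nat.exists_eq_succ_of_ne_zero hs
  have hcoeff := congrArg (coeff · (2 * i + 1 + 1)) (two_mul_coeff_heightSeries_X hp hkp)
  simp only [coeff_ofNat_mul, neg_mul, coeff_neg, coeff_X_mul,
    coeff_succ_alternatingSeries, coeff_smul, coeff_one_add_X_pow_sub_one_sub_X_pow,
    smul_eq_mul] at hcoeff
  rw [sum_Izero_eq_coeff_heightSeries p hk, Nat.succ_sub_one,
    show 2 * i.succ - 1 = 2 * i + 1 by lia]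
  refine mul_left_cancel₀ (zmod_two_ne_zero hp) ?_
  linear_combination hcoeff

end AlternatingCoefficients

section BernoulliHalf

open PowerSeries

theorem rescale_half_exp_sq : rescale (1 / 2 : ℚ) (exp ℚ) ^ 2 = exp ℚ := by
  rw [← map_pow, exp_pow_eq_rescale_exp, rescale_rescale]
  simp

theorem mk_bernoulli_eval_half :
    (mk fun n => Polynomial.aeval (1 / 2 : ℚ) ((1 / n.factorial : ℚ) • Polynomial.bernoulli n)) =
      2 * rescale (1 / 2 : ℚ) (bernoulliPowerSeries ℚ) - bernoulliPowerSeries ℚ := by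
  have exp_sub_one_ne_zero : exp ℚ - 1 ≠ 0 := fun h => by
    simpa [coeff_exp, coeff_one] using congrArg (coeff 1) h
  have two_mul_C_half : (2 : ℚ⟦X⟧) * C (1 / 2 : ℚ) = 1 := by
    rw [← map_ofNat C 2, ← map_mul]
    norm_num
  have rescaled := congrArg (rescale (1 / 2 : ℚ)) (bernoulliPowerSeries_mul_exp_sub_one ℚ)
  rw [map_mul, map_sub, map_one, rescale_X] at rescaled
  apply mul_right_cancel₀ exp_sub_one_ne_zero
  rw [Polynomial.bernoulli_generating_function, sub_mul, bernoulliPowerSeries_mul_exp_sub_one]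
  have half_sq := rescale_half_exp_sq
  generalize rescale (1 / 2 : ℚ) (exp ℚ) = E at rescaled half_sq ⊢
  linear_combination 2 * rescale (1 / 2 : ℚ) (bernoulliPowerSeries ℚ) * half_sq
    - 2 * (E + 1) * rescaled - X * (E + 1) * two_mul_C_half

theorem two_pow_mul_bernoulli_eval_half (n : ℕ) :
    2 ^ n * (Polynomial.bernoulli n).eval (1 / 2 : ℚ) = (2 - 2 ^ n) * bernoulli n := by
  have h := congrArg (coeff n) mk_bernoulli_eval_half
  rw [map_sub, ← map_ofNat C 2, coeff_C_mul, coeff_rescale] at h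
  simp only [bernoulliPowerSeries, coeff_mk, map_smul, smul_eq_mul, Polynomial.coe_aeval_eq_eval,
    eq_ratCast, Rat.cast_id] at h
  have eval_half : (Polynomial.bernoulli n).eval (1 / 2 : ℚ) =
      (2 * (1 / 2) ^ n - 1) * bernoulli n := by
    field_simp at h ⊢
    linear_combination h
  rw [eval_half, one_div, inv_pow]
  field_simp

end BernoulliHalf

section RatReduction

variable (p : ℕ) [Fact p.Prime]

/-- The `p`-integral rationals, i.e. the localization `ℤ_(p)` as a subring of `ℚ`. -/
abbrev pIntegers : Subring ℚ := (Rat.padicValuation p).integer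

theorem den_natCast_zmod_ne_zero (x : pIntegers p) : ((x : ℚ).den : ZMod p) ≠ 0 := by
  rw [ne_eq, ZMod.natCast_eq_zero_iff]
  exact Rat.padicValuation_le_one_iff.mp x.2

/-- Reduction modulo `p` of the `p`-integral rationals. It is `Rat.cast`, which is not additive on
all of `ℚ` because denominators divisible by `p` are sent to `0`. -/
def ratReduction : pIntegers p →+* ZMod p where
  toFun x := ((x : ℚ) : ZMod p)
  map_one' := Rat.cast_one
  map_zero' := Rat.cast_zero
  map_mul' x y :=
    Rat.cast_mul_of_ne_zero (den_natCast_zmod_ne_zero p x) (den_natCast_zmod_ne_zero p y)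
  map_add' x y :=
    Rat.cast_add_of_ne_zero (den_natCast_zmod_ne_zero p x) (den_natCast_zmod_ne_zero p y)

variable {p}

theorem inv_natCast_mem_pIntegers {n : ℕ} (hn : n ∈ Ico 1 p) :
    (n : ℚ)⁻¹ ∈ pIntegers p := by
  obtain ⟨hpos, hlt⟩ := mem_Ico.mp hn
  refine Rat.padicValuation_le_one_iff.mpr ?_
  rw [Rat.inv_natCast_den_of_pos hpos]
  exact Nat.not_dvd_of_pos_of_lt hpos hlt

theorem bernoulli_mem_pIntegers {n : ℕ} (hn : n + 1 < p) :
    bernoulli n ∈ pIntegers p := by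
  induction n using Nat.strong_induction_on with
  | _ n ih =>
  have recursion : bernoulli n = ((n + 1 : ℕ) : ℚ)⁻¹ *
      (((if n + 1 = 1 then 1 else 0 : ℕ) : ℚ) -
        ∑ k ∈ range n, ((n + 1).choose k : ℚ) * bernoulli k) := by
    have h := sum_bernoulli (n + 1)
    rw [sum_range_succ, Nat.choose_succ_self_right] at h
    rw [eq_inv_mul_iff_mul_eq₀ (by positivity)]
    push_cast at h ⊢
    linear_combination h
  rw [recursion]
  refine mul_mem (inv_natCast_mem_pIntegers (by simp [hn])) (sub_mem (natCast_mem _ _) ?_)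
  refine sum_mem fun k hk => mul_mem (natCast_mem _ _) ?_
  have hkn := mem_range.mp hk
  exact ih k hkn (by lia)

theorem exists_map_subtype_eq_bernoulli {n : ℕ} (hn : n + 1 < p) :
    ∃ P : (pIntegers p)[X],
      P.map (pIntegers p).subtype = Polynomial.bernoulli n := by
  rw [← Polynomial.mem_lifts, Polynomial.lifts_iff_coeff_lifts]
  intro i
  rw [Polynomial.coeff_bernoulli]
  split_ifs
  · exact ⟨⟨_, mul_mem (bernoulli_mem_pIntegers (by lia)) (natCast_mem _ _)⟩, rfl⟩
  · exact ⟨0, rfl⟩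

theorem exists_coe_eq_bernoulli_eval_sub_of_ratReduction_eq {n : ℕ} (hn : n + 1 < p)
    {t u : pIntegers p} (h : ratReduction p t = ratReduction p u) :
    ∃ d : pIntegers p, ratReduction p d = 0 ∧
      (d : ℚ) = (Polynomial.bernoulli n).eval (t : ℚ) - (Polynomial.bernoulli n).eval (u : ℚ) := by
  obtain ⟨P, hP⟩ := exists_map_subtype_eq_bernoulli hn
  have coe_eval (x : pIntegers p) :
      ((P.eval x : pIntegers p) : ℚ) = (Polynomial.bernoulli n).eval (x : ℚ) := by
    rw [← hP, Polynomial.eval_map]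
    exact (Polynomial.eval₂_at_apply (pIntegers p).subtype x).symm
  refine ⟨P.eval t - P.eval u, ?_, by push_cast [coe_eval]; rfl⟩
  rw [map_sub, ← Polynomial.eval₂_hom, ← Polynomial.eval₂_hom, h, sub_self]

end RatReduction

section AlternatingPowerSum

theorem sum_range_neg_one_pow_add_one_mul {R : Type*} [CommRing R] (f : ℕ → R) (q : ℕ) :
    ∑ m ∈ range (2 * q + 1), ((-1) ^ m + 1) * f m = 2 * ∑ i ∈ range (q + 1), f (2 * i) := by
  induction q with
  | zero => simp [one_add_one_eq_two]
  | succ q ih =>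
    rw [mul_add, mul_one, sum_range_succ, sum_range_succ, ih, sum_range_succ _ (q + 1)]
    simp only [pow_succ, pow_mul, mul_add, mul_one]
    ring

theorem two_pow_mul_sum_range_pow_eq_bernoulli (e n : ℕ) :
    (e + 1) * 2 ^ (e + 1) * ∑ i ∈ range n, (i : ℚ) ^ e =
      2 ^ (e + 1) *
          ((Polynomial.bernoulli (e + 1)).eval (n : ℚ) -
            (Polynomial.bernoulli (e + 1)).eval (1 / 2)) +
        (2 - 2 ^ (e + 2)) * bernoulli (e + 1) := by
  have faulhaber := Polynomial.sum_range_pow_eq_bernoulli_sub n e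
  have half := two_pow_mul_bernoulli_eval_half (e + 1)
  linear_combination 2 ^ (e + 1) * faulhaber + half

variable {p : ℕ} [Fact p.Prime]

theorem natCast_succ_eq_two_inv {q : ℕ} (hq : p = 2 * q + 1) :
    ((q + 1 : ℕ) : ZMod p) = 2⁻¹ := by
  have h : ((2 * q + 1 : ℕ) : ZMod p) = 0 := by rw [← hq, CharP.cast_eq_zero]
  apply eq_inv_of_mul_eq_one_left
  push_cast at h ⊢
  linear_combination h

theorem two_pow_mul_sum_range_half_pow_eq_bernoulli {e q : ℕ} (hq : p = 2 * q + 1)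
    (he : e + 2 < p) :
    (e + 1) * 2 ^ (e + 1) * ∑ i ∈ range (q + 1), (i : ZMod p) ^ e =
      (2 - 2 ^ (e + 2)) * ((bernoulli (e + 1) : ℚ) : ZMod p) := by
  let half : pIntegers p := ⟨_, inv_natCast_mem_pIntegers (n := 2) (by simp; lia)⟩
  let bern : pIntegers p := ⟨_, bernoulli_mem_pIntegers (n := e + 1) (by lia)⟩
  have half_congr : ratReduction p ((q + 1 : ℕ) : pIntegers p) = ratReduction p half := by
    rw [map_natCast, natCast_succ_eq_two_inv hq]
    exact (Rat.cast_inv_nat 2).symm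
  obtain ⟨d, hd, d_eq⟩ :=
    exists_coe_eq_bernoulli_eval_sub_of_ratReduction_eq (n := e + 1) (by lia) half_congr
  have integral_identity :
      (e + 1) * 2 ^ (e + 1) * ∑ i ∈ range (q + 1), (i : pIntegers p) ^ e =
        2 ^ (e + 1) * d + (2 - 2 ^ (e + 2)) * bern := by
    apply (pIntegers p).subtype_injective
    simp only [map_mul, map_add, map_sub, map_sum, map_pow, map_natCast, map_one, map_ofNat]
    simpa [d_eq, half, bern] using two_pow_mul_sum_range_pow_eq_bernoulli e (q + 1)
  have reduced := congrArg (ratReduction p) integral_identity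
  simp only [map_mul, map_add, map_sub, map_sum, map_pow, map_natCast, map_one, map_ofNat, hd,
    mul_zero, zero_add] at reduced
  exact reduced

theorem alternating_sum_range_pow_eq_bernoulli (hp : p ≠ 2) {e : ℕ} (he : e + 2 < p) :
    (e + 1) * ∑ m ∈ range p, (-1) ^ m * (m : ZMod p) ^ e =
      (2 - 2 ^ (e + 2)) * ((bernoulli (e + 1) : ℚ) : ZMod p) := by
  obtain ⟨q, hq⟩ := (Fact.out : p.Prime).odd_of_ne_two hp
  have power_sum_zero : ∑ m ∈ range p, (m : ZMod p) ^ e = 0 := by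
    rw [sum_range_natCast_zmod fun a : ZMod p => a ^ e]
    exact FiniteField.sum_pow_lt_card_sub_one _ _ (by rw [ZMod.card]; lia)
  have even_terms := sum_range_neg_one_pow_add_one_mul (fun m => (m : ZMod p) ^ e) q
  simp only [← hq, add_mul, one_mul, sum_add_distrib, power_sum_zero, add_zero, Nat.cast_mul,
    mul_pow, ← mul_sum] at even_terms
  rw [even_terms, ← two_pow_mul_sum_range_half_pow_eq_bernoulli hq he]
  push_cast
  ring

theorem inv_pow_eq_pow_of_add_eq {k e : ℕ} (h : k + e = p - 1) {a : ZMod p} (ha : a ≠ 0) :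
    a⁻¹ ^ k = a ^ e := by
  rw [inv_pow]
  apply inv_eq_of_mul_eq_one_right
  rw [← pow_add, h, ZMod.pow_card_sub_one_eq_one ha]

theorem sum_Ico_alternating_inv_pow (hp : p ≠ 2) {k : ℕ} (hk : 2 ≤ k) (hkp : k + 1 < p) :
    ∑ m ∈ Ico 1 p, (-1) ^ m * (m : ZMod p)⁻¹ ^ k =
      -2 * (1 - (2 : ZMod p) ^ ((1 : ℤ) - k)) * ((bernoulli (p - k) / k : ℚ) : ZMod p) := by
  obtain ⟨e, he⟩ : ∃ e, p = k + e + 1 := ⟨p - k - 1, by lia⟩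
  have hk0 : (k : ZMod p) ≠ 0 := natCast_zmod_ne_zero (mem_Ico.mpr (by lia))
  have h20 := zmod_two_ne_zero hp
  have inverse_sum : ∑ m ∈ Ico 1 p, (-1) ^ m * (m : ZMod p)⁻¹ ^ k =
      ∑ m ∈ range p, (-1) ^ m * (m : ZMod p) ^ e := by
    rw [sum_range_eq_add_Ico _ (by lia), Nat.cast_zero, zero_pow (by lia), mul_zero, zero_add]
    exact sum_congr rfl fun m hm => by
      rw [inv_pow_eq_pow_of_add_eq (e := e) (by lia) (natCast_zmod_ne_zero hm)]
  have two_zpow : (2 : ZMod p) ^ ((1 : ℤ) - k) = 2 ^ (e + 1) := by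
    rw [zpow_sub₀ h20, zpow_one, zpow_natCast, div_eq_mul_inv, ← inv_pow,
      inv_pow_eq_pow_of_add_eq (e := e) (by lia) h20, pow_succ']
  have succ_e : (e + 1 : ZMod p) = -k := by
    have h : ((k + e + 1 : ℕ) : ZMod p) = 0 := by rw [← he, CharP.cast_eq_zero]
    push_cast at h
    linear_combination h
  have cast_div : ((bernoulli (e + 1) / k : ℚ) : ZMod p) =
      ((bernoulli (e + 1) : ℚ) : ZMod p) / k := by
    rw [Rat.cast_div_of_ne_zero _ (by simpa), Rat.cast_natCast]
    exact den_natCast_zmod_ne_zero p ⟨_, bernoulli_mem_pIntegers (by lia)⟩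
  have alternating := alternating_sum_range_pow_eq_bernoulli hp (e := e) (by lia)
  rw [succ_e] at alternating
  rw [inverse_sum, two_zpow, show p - k = e + 1 by lia, cast_div, mul_div_assoc',
    eq_div_iff hk0]
  linear_combination -alternating

end AlternatingPowerSum

/-- Finite analogue of the Le–Murakami relation:
`∑_{𝐤 ∈ I₀(k,s)} (-1)^{dep 𝐤} H_p(𝐤) ≡ 2 binom(k-1,2s-1)(1-2^{1-k}) B_{p-k}/k (mod p)`. -/
theorem stmt_13 (k s : ℕ) (hk : 2 ≤ k) (hs : 1 ≤ s) (hks : 2 * s ≤ k)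
    (p : ℕ) [Fact p.Prime] (hp : k + 2 < p) :
    ∑ c ∈ Izero k s, (-1 : ZMod p) ^ c.length * Hp p c.blocks =
      2 * ((k - 1).choose (2 * s - 1) : ZMod p) * (1 - (2 : ZMod p) ^ ((1 : ℤ) - k)) *
        ((bernoulli (p - k) / k : ℚ) : ZMod p) := by
  have hp2 : p ≠ 2 := by lia
  rw [sum_Izero_eq_neg_choose_mul_alternating_sum hp2 (by lia) (by lia) (by lia),
    sum_Ico_alternating_inv_pow hp2 hk (by lia)]
  ring
end
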